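/- Let T be an N-ω-DCTP_2 theory. Then every internally NSOP_1 partial type over a model M is co-NSOP_1. -/

import Mathlib

namespace NSOP3Paper

open FirstOrder Language

universe u v w w' w₂ x y z

/-- Consistency (equivalently, by compactness over the monster model, finite
satisfiability) of a family of conditions on tuples. -/
def FamConsistent {ι : Type*} {X : Type*} (C : ι → X → Prop) : Prop :=
  ∀ s : Finset ι, ∃ xx : X, ∀ i ∈ s, C i xx

/-- `k`-inconsistency of a family of conditions: any `k` of them (with pairwise
distinct indices) are jointly unsatisfiable. -/
def FamKInconsistent {ι : Type*} {X : Type*} (k : ℕ) (C : ι → X → Prop) : Prop :=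
  ∀ s : Finset ι, s.card = k → ¬∃ xx : X, ∀ i ∈ s, C i xx

/-- Flattening of a family of tuples into a single tuple. -/
def flat {𝕄 : Type w} {ι : Type*} {β : Type*} (a : ι → β → 𝕄) : ι × β → 𝕄 :=
  fun q => a q.1 q.2

/-- A first-order `L`-formula in free variables `α`, together with a tuple of
parameters from `𝕄`; this represents an instance `φ(x̄, b̄)`. -/
structure ParamFormula (L : FirstOrder.Language.{u, v}) (𝕄 : Type w) [L.Structure 𝕄]
    (α : Type w') where
  Params : Type
  toFormula : L.Formula (α ⊕ Params)
  params : Params → 𝕄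

namespace ParamFormula

variable {L : FirstOrder.Language.{u, v}} {𝕄 : Type w} [L.Structure 𝕄] {α : Type w'}

/-- Realization of `φ(x̄, b̄)` at a tuple from `𝕄`. -/
def Realize (φ : ParamFormula L 𝕄 α) (xx : α → 𝕄) : Prop :=
  φ.toFormula.Realize (Sum.elim xx φ.params)

/-- All parameters of `φ` lie in `A`; i.e. `φ ∈ L(A)`. -/
def ParamsIn (φ : ParamFormula L 𝕄 α) (A : Set 𝕄) : Prop :=
  ∀ i, φ.params i ∈ A

/-- Negation of a formula with parameters. -/
protected def not (φ : ParamFormula L 𝕄 α) : ParamFormula L 𝕄 α :=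
  ⟨φ.Params, BoundedFormula.not φ.toFormula, φ.params⟩

/-- Substitute a tuple of elements of `𝕄` for the second group of free variables,
obtaining the instance `φ(x̄, c̄)` as a formula with parameters. -/
def subst {γ : Type} (φ : ParamFormula L 𝕄 (α ⊕ γ)) (c : γ → 𝕄) : ParamFormula L 𝕄 α :=
  ⟨γ ⊕ φ.Params,
    (φ.toFormula).relabel (Sum.elim (Sum.map id Sum.inl) (Sum.inr ∘ Sum.inr)),
    Sum.elim c φ.params⟩

end ParamFormula

section TypesDefs

variable (L : FirstOrder.Language.{u, v}) (𝕄 : Type w) [L.Structure 𝕄]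

/-- Two tuples have the same type over the parameter set `A` (written `b ≡_A b'`). -/
def TpEq (A : Set 𝕄) {β : Type w'} (b b' : β → 𝕄) : Prop :=
  ∀ φ : ParamFormula L 𝕄 β, φ.ParamsIn A → (φ.Realize b ↔ φ.Realize b')

/-- A complete global type in variables `α`: a complete, consistent set of formulas
with parameters from the monster model `𝕄`. -/
structure GlobalType (α : Type w') where
  Mem : ParamFormula L 𝕄 α → Prop
  consistent : ∀ S : Finset (ParamFormula L 𝕄 α), (∀ φ ∈ S, Mem φ) →
    ∃ xx : α → 𝕄, ∀ φ ∈ S, φ.Realize xx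
  complete : ∀ φ : ParamFormula L 𝕄 α, Mem φ ∨ Mem φ.not

/-- A sequence of tuples is indiscernible over the parameter set `A`: any two finite
increasing subtuples of the same length have the same type over `A`. -/
def IndiscernibleOver (A : Set 𝕄) {β : Type w'} (b : ℕ → β → 𝕄) : Prop :=
  ∀ (n : ℕ) (f g : Fin n → ℕ), StrictMono f → StrictMono g →
    TpEq L 𝕄 A (fun q : Fin n × β => b (f q.1) q.2) (fun q : Fin n × β => b (g q.1) q.2)

end TypesDefs

namespace GlobalType

variable {L : FirstOrder.Language.{u, v}} {𝕄 : Type w} [L.Structure 𝕄] {α : Type w'}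

/-- A global type is invariant over `A` if membership of `φ(x̄, b̄)` depends only on
the type of `b̄` over `A`. -/
def InvariantOver (p : GlobalType L 𝕄 α) (A : Set 𝕄) : Prop :=
  ∀ (P : Type) (ψ : L.Formula (α ⊕ P)) (b b' : P → 𝕄),
    TpEq L 𝕄 A b b' → (p.Mem ⟨P, ψ, b⟩ ↔ p.Mem ⟨P, ψ, b'⟩)

/-- A global type is finitely satisfiable in `A` if each of its formulas is satisfied
by a tuple from `A`. -/
def FinSatIn (p : GlobalType L 𝕄 α) (A : Set 𝕄) : Prop :=
  ∀ φ : ParamFormula L 𝕄 α, p.Mem φ → ∃ xx : α → 𝕄, (∀ i, xx i ∈ A) ∧ φ.Realize xx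

/-- `a ⊨ p|_B` : the tuple `a` realizes the restriction of the global type `p` to the
parameter set `B`. -/
def RealizesOver (p : GlobalType L 𝕄 α) (B : Set 𝕄) (a : α → 𝕄) : Prop :=
  ∀ φ : ParamFormula L 𝕄 α, p.Mem φ → φ.ParamsIn B → φ.Realize a

/-- `(b i)` is a Morley sequence in `p` over `A`: each `b i ⊨ p|_{A b_{<i}}`. -/
def IsMorleyOver (p : GlobalType L 𝕄 α) (A : Set 𝕄) (b : ℕ → α → 𝕄) : Prop :=
  ∀ i : ℕ, p.RealizesOver (A ∪ ⋃ j ∈ Set.Iio i, Set.range (b j)) (b i)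

end GlobalType

section MorleyDefs

variable (L : FirstOrder.Language.{u, v}) (𝕄 : Type w) [L.Structure 𝕄]

/-- `(b i)` is an invariant Morley sequence over `A`: a Morley sequence in some global
type invariant over `A`. -/
def IsInvMorleyOver (A : Set 𝕄) {α : Type w'} (b : ℕ → α → 𝕄) : Prop :=
  ∃ p : GlobalType L 𝕄 α, p.InvariantOver A ∧ p.IsMorleyOver A b

/-- `(b i)` is a coheir Morley sequence over `A`: a Morley sequence in some global
type finitely satisfiable in `A`. -/
def IsCoheirMorleyOver (A : Set 𝕄) {α : Type w'} (b : ℕ → α → 𝕄) : Prop :=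
  ∃ p : GlobalType L 𝕄 α, p.FinSatIn A ∧ p.IsMorleyOver A b

end MorleyDefs

namespace ParamFormula

variable {L : FirstOrder.Language.{u, v}} {𝕄 : Type w} [L.Structure 𝕄] {α : Type w'}

/-- `φ(x̄, b̄)` Kim-divides over `A`: some invariant Morley sequence over `A` starting
with `b̄` makes the corresponding instances inconsistent. -/
def KimDividesOver (φ : ParamFormula L 𝕄 α) (A : Set 𝕄) : Prop :=
  ∃ b : ℕ → φ.Params → 𝕄, b 0 = φ.params ∧ IsInvMorleyOver L 𝕄 A b ∧
    ¬FamConsistent fun (i : ℕ) (xx : α → 𝕄) => φ.toFormula.Realize (Sum.elim xx (b i))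

/-- `φ(x̄, b̄)` Conant-divides over `A`: every invariant Morley sequence over `A`
starting with `b̄` makes the corresponding instances inconsistent. -/
def ConantDividesOver (φ : ParamFormula L 𝕄 α) (A : Set 𝕄) : Prop :=
  ∀ b : ℕ → φ.Params → 𝕄, b 0 = φ.params → IsInvMorleyOver L 𝕄 A b →
    ¬FamConsistent fun (i : ℕ) (xx : α → 𝕄) => φ.toFormula.Realize (Sum.elim xx (b i))

/-- `φ(x̄, b̄)` divides over `A`: some `A`-indiscernible sequence starting with `b̄`
makes the corresponding instances inconsistent. -/
def DividesOver (φ : ParamFormula L 𝕄 α) (A : Set 𝕄) : Prop :=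
  ∃ b : ℕ → φ.Params → 𝕄, b 0 = φ.params ∧ IndiscernibleOver L 𝕄 A b ∧
    ¬FamConsistent fun (i : ℕ) (xx : α → 𝕄) => φ.toFormula.Realize (Sum.elim xx (b i))

/-- `φ` Kim-forks over `A`: it implies a finite disjunction of formulas Kim-dividing
over `A`. -/
def KimForksOver (φ : ParamFormula L 𝕄 α) (A : Set 𝕄) : Prop :=
  ∃ (k : ℕ) (ψ : Fin k → ParamFormula L 𝕄 α), (∀ j, (ψ j).KimDividesOver A) ∧
    ∀ xx : α → 𝕄, φ.Realize xx → ∃ j, (ψ j).Realize xx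

/-- `φ` Conant-forks over `A`: it implies a finite disjunction of formulas
Conant-dividing over `A`. -/
def ConantForksOver (φ : ParamFormula L 𝕄 α) (A : Set 𝕄) : Prop :=
  ∃ (k : ℕ) (ψ : Fin k → ParamFormula L 𝕄 α), (∀ j, (ψ j).ConantDividesOver A) ∧
    ∀ xx : α → 𝕄, φ.Realize xx → ∃ j, (ψ j).Realize xx

/-- `φ` forks over `A`: it implies a finite disjunction of formulas dividing over `A`. -/
def ForksOver (φ : ParamFormula L 𝕄 α) (A : Set 𝕄) : Prop :=
  ∃ (k : ℕ) (ψ : Fin k → ParamFormula L 𝕄 α), (∀ j, (ψ j).DividesOver A) ∧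
    ∀ xx : α → 𝕄, φ.Realize xx → ∃ j, (ψ j).Realize xx

end ParamFormula

section IndDefs

variable (L : FirstOrder.Language.{u, v}) (𝕄 : Type w) [L.Structure 𝕄]

/-- `a ⫝^K_A B` : `tp(a/A ∪ B)` contains no formula Kim-forking over `A`. -/
def IndKim (A B : Set 𝕄) {γ : Type w'} (a : γ → 𝕄) : Prop :=
  ∀ φ : ParamFormula L 𝕄 γ, φ.ParamsIn (A ∪ B) → φ.Realize a → ¬φ.KimForksOver A

/-- `a ⫝^{Kd}_A B` : `tp(a/A ∪ B)` contains no formula Kim-dividing over `A`. -/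
def IndKd (A B : Set 𝕄) {γ : Type w'} (a : γ → 𝕄) : Prop :=
  ∀ φ : ParamFormula L 𝕄 γ, φ.ParamsIn (A ∪ B) → φ.Realize a → ¬φ.KimDividesOver A

/-- `a ⫝^{K*}_A B` : Conant-independence. -/
def IndConant (A B : Set 𝕄) {γ : Type w'} (a : γ → 𝕄) : Prop :=
  ∀ φ : ParamFormula L 𝕄 γ, φ.ParamsIn (A ∪ B) → φ.Realize a → ¬φ.ConantForksOver A

/-- `a ⫝^{K*d}_A B` : Conant-dividing independence. -/
def IndConantD (A B : Set 𝕄) {γ : Type w'} (a : γ → 𝕄) : Prop :=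
  ∀ φ : ParamFormula L 𝕄 γ, φ.ParamsIn (A ∪ B) → φ.Realize a → ¬φ.ConantDividesOver A

/-- `a ⫝^f_A B` : forking-independence. -/
def IndForking (A B : Set 𝕄) {γ : Type w'} (a : γ → 𝕄) : Prop :=
  ∀ φ : ParamFormula L 𝕄 γ, φ.ParamsIn (A ∪ B) → φ.Realize a → ¬φ.ForksOver A

/-- `a ⫝^i_A B` : `tp(a/A ∪ B)` extends to a global type invariant over `A`. -/
def IndInv (A B : Set 𝕄) {γ : Type w'} (a : γ → 𝕄) : Prop :=
  ∃ p : GlobalType L 𝕄 γ, p.InvariantOver A ∧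
    ∀ φ : ParamFormula L 𝕄 γ, φ.ParamsIn (A ∪ B) → φ.Realize a → p.Mem φ

/-- `a ⫝^u_A B` : `tp(a/A ∪ B)` extends to a global type finitely satisfiable in `A`. -/
def IndFinSat (A B : Set 𝕄) {γ : Type w'} (a : γ → 𝕄) : Prop :=
  ∃ p : GlobalType L 𝕄 γ, p.FinSatIn A ∧
    ∀ φ : ParamFormula L 𝕄 γ, φ.ParamsIn (A ∪ B) → φ.Realize a → p.Mem φ

/-- `a ⫝^{K+}_A b` : there is an invariant Morley sequence over `A` starting with `b`
that is indiscernible over `A ∪ a`. -/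
def IndKPlus (A : Set 𝕄) {δ : Type w'} {γ : Type w₂} (b : δ → 𝕄) (a : γ → 𝕄) : Prop :=
  ∃ bs : ℕ → δ → 𝕄, bs 0 = b ∧ IsInvMorleyOver L 𝕄 A bs ∧
    IndiscernibleOver L 𝕄 (A ∪ Set.range a) bs

/-- `a ⫝^{K+u}_A b` : there is a coheir Morley sequence over `A` starting with `b`
that is indiscernible over `A ∪ a`. -/
def IndKPlusU (A : Set 𝕄) {δ : Type w'} {γ : Type w₂} (b : δ → 𝕄) (a : γ → 𝕄) : Prop :=
  ∃ bs : ℕ → δ → 𝕄, bs 0 = b ∧ IsCoheirMorleyOver L 𝕄 A bs ∧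
    IndiscernibleOver L 𝕄 (A ∪ Set.range a) bs

/-- Conant-independence `⫝^{K*}` is symmetric (over every small model). -/
def ConantSymmetric : Prop :=
  ∀ (M : L.ElementarySubstructure 𝕄) (γ δ : Type w) (a : γ → 𝕄) (b : δ → 𝕄),
    IndConant L 𝕄 (M : Set 𝕄) (Set.range b) a → IndConant L 𝕄 (M : Set 𝕄) (Set.range a) b

/-- Conant-dividing independence `⫝^{K*d}` is symmetric. -/
def ConantDSymmetric : Prop :=
  ∀ (M : L.ElementarySubstructure 𝕄) (γ δ : Type w) (a : γ → 𝕄) (b : δ → 𝕄),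
    IndConantD L 𝕄 (M : Set 𝕄) (Set.range b) a → IndConantD L 𝕄 (M : Set 𝕄) (Set.range a) b

/-- The relation `⫝^{K+}` is symmetric. -/
def KPlusSymmetric : Prop :=
  ∀ (M : L.ElementarySubstructure 𝕄) (γ δ : Type w) (a : γ → 𝕄) (b : δ → 𝕄),
    IndKPlus L 𝕄 (M : Set 𝕄) b a → IndKPlus L 𝕄 (M : Set 𝕄) a b

/-- Forking-independence satisfies the chain condition with respect to invariant
Morley sequences. -/
def ChainConditionF : Prop :=
  ∀ (M : L.ElementarySubstructure 𝕄) (γ δ : Type w) (a : γ → 𝕄) (bs : ℕ → δ → 𝕄),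
    IsInvMorleyOver L 𝕄 (M : Set 𝕄) bs →
    IndForking L 𝕄 (M : Set 𝕄) (Set.range (bs 0)) a →
    ∃ bs' : ℕ → δ → 𝕄,
      TpEq L 𝕄 ((M : Set 𝕄) ∪ Set.range (bs 0)) (flat bs') (flat bs) ∧
      IndiscernibleOver L 𝕄 ((M : Set 𝕄) ∪ Set.range a) bs' ∧
      IndForking L 𝕄 (M : Set 𝕄) (Set.range (flat bs')) a

/-- Kim-independence satisfies the chain condition with respect to invariant Morley
sequences. -/
def ChainConditionK : Prop :=
  ∀ (M : L.ElementarySubstructure 𝕄) (γ δ : Type w) (a : γ → 𝕄) (bs : ℕ → δ → 𝕄),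
    IsInvMorleyOver L 𝕄 (M : Set 𝕄) bs →
    IndKim L 𝕄 (M : Set 𝕄) (Set.range (bs 0)) a →
    ∃ bs' : ℕ → δ → 𝕄,
      TpEq L 𝕄 ((M : Set 𝕄) ∪ Set.range (bs 0)) (flat bs') (flat bs) ∧
      IndiscernibleOver L 𝕄 ((M : Set 𝕄) ∪ Set.range a) bs' ∧
      IndKim L 𝕄 (M : Set 𝕄) (Set.range (flat bs')) a

/-- `T` is NSOP₃: there is no definable binary relation on tuples with no 3-cycles
containing an infinite chain. -/
def IsNSOP3 : Prop :=
  ¬∃ (m : ℕ) (R : ParamFormula L 𝕄 (Fin m ⊕ Fin m)) (a : ℕ → Fin m → 𝕄),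
    (∀ i j : ℕ, i < j → R.Realize (Sum.elim (a i) (a j))) ∧
    ¬∃ x1 x2 x3 : Fin m → 𝕄,
      R.Realize (Sum.elim x1 x2) ∧ R.Realize (Sum.elim x2 x3) ∧ R.Realize (Sum.elim x3 x1)

/-- `𝕄` is a `κ`-monster: every consistent type in fewer than `κ` variables over a
parameter set of size less than `κ` is realized. -/
class IsMonster (κ : Cardinal.{w}) : Prop where
  saturated : ∀ {α : Type w} (A : Set 𝕄) (S : Set (ParamFormula L 𝕄 α)),
    Cardinal.mk α < κ → Cardinal.mk A < κ → (∀ φ ∈ S, φ.ParamsIn A) →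
    (∀ S₀ : Finset (ParamFormula L 𝕄 α), (∀ φ ∈ S₀, φ ∈ S) →
      ∃ xx : α → 𝕄, ∀ φ ∈ S₀, φ.Realize xx) →
    ∃ xx : α → 𝕄, ∀ φ ∈ S, φ.Realize xx

/-- A tuple realizes the partial type `P`. -/
def RealizesPType {nv : ℕ} (P : Set (ParamFormula L 𝕄 (Fin nv))) (a : Fin nv → 𝕄) : Prop :=
  ∀ φ ∈ P, φ.Realize a

/-- `p(x̄)` is co-NSOP₁: no `L(M)`-formula `φ(x̄, ȳ)` and tree of tuples of
realizations of `p` witness SOP₁-style consistency/inconsistency. -/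
def CoNSOP1 (M : Set 𝕄) {nv : ℕ} (P : Set (ParamFormula L 𝕄 (Fin nv))) : Prop :=
  ¬∃ (k m : ℕ) (φ : ParamFormula L 𝕄 (Fin k ⊕ (Fin m × Fin nv)))
      (b : List Bool → Fin m → Fin nv → 𝕄),
    φ.ParamsIn M ∧
    (∀ η j, RealizesPType L 𝕄 P (b η j)) ∧
    (∀ σ : ℕ → Bool, FamConsistent fun (n : ℕ) (xx : Fin k → 𝕄) =>
      (φ.subst (flat (b (List.ofFn fun i : Fin n => σ i)))).Realize xx) ∧
    (∀ η₁ η₂ : List Bool, (η₁ ++ [false]) <+: η₂ →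
      ¬∃ xx : Fin k → 𝕄, (φ.subst (flat (b η₂))).Realize xx ∧
        (φ.subst (flat (b (η₁ ++ [true])))).Realize xx)

/-- The set of realizations of the partial type `P`. -/
def PRealizations {nv : ℕ} (P : Set (ParamFormula L 𝕄 (Fin nv))) : Type w :=
  { a : Fin nv → 𝕄 // RealizesPType L 𝕄 P a }

/-- The language `L_p` associated to a partial `nv`-type: an `m`-ary relation symbol
for each `L(M)`-formula in `m` groups of `nv` variables. -/
def pLang (M : Set 𝕄) (nv : ℕ) : Language :=
  ⟨fun _ => Empty, fun m => { φ : ParamFormula L 𝕄 (Fin m × Fin nv) // φ.ParamsIn M }⟩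

/-- The structure `M_p` on the set of realizations of `p`, with relations interpreted
by the corresponding formulas in `𝕄`. -/
instance pStruct (M : Set 𝕄) {nv : ℕ} (P : Set (ParamFormula L 𝕄 (Fin nv))) :
    (pLang L 𝕄 M nv).Structure (PRealizations L 𝕄 P) where
  funMap := fun {n} f _ => f.elim
  RelMap := fun {m} R xs => R.1.Realize fun q : Fin m × Fin nv => (xs q.1).1 q.2

end IndDefs

/-- An SOP₁ pattern witnessed inside the structure `W`. -/
def SOP1PatternIn (L' : FirstOrder.Language.{x, y}) (W : Type z) [L'.Structure W] : Prop :=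
  ∃ (k n : ℕ) (φ : L'.Formula (Fin k ⊕ Fin n)) (bt : List Bool → Fin n → W),
    (∀ σ : ℕ → Bool, FamConsistent fun (i : ℕ) (xx : Fin k → W) =>
      φ.Realize (Sum.elim xx (bt (List.ofFn fun j : Fin i => σ j)))) ∧
    (∀ η₁ η₂ : List Bool, (η₁ ++ [false]) <+: η₂ →
      ¬∃ xx : Fin k → W, φ.Realize (Sum.elim xx (bt η₂)) ∧
        φ.Realize (Sum.elim xx (bt (η₁ ++ [true]))))

/-- The complete theory of `N` is NSOP₁: no SOP₁ pattern in any elementarily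
equivalent structure. -/
def IsNSOP1Th (L' : FirstOrder.Language.{x, y}) (N : Type z) [L'.Structure N] : Prop :=
  ¬∃ (W : Type (max x y z)) (S : L'.Structure W),
    L'.completeTheory N = @Language.completeTheory L' W S ∧ @SOP1PatternIn L' W S

/-- The formula `φ(x̄, ȳ)` has the tree property, witnessed in `W`. -/
def FormulaTPIn (L' : FirstOrder.Language.{x, y}) (W : Type z) [L'.Structure W]
    {k n : ℕ} (φ : L'.Formula (Fin k ⊕ Fin n)) : Prop :=
  ∃ (kk : ℕ) (bt : List ℕ → Fin n → W),
    (∀ σ : ℕ → ℕ, FamConsistent fun (i : ℕ) (xx : Fin k → W) =>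
      φ.Realize (Sum.elim xx (bt (List.ofFn fun j : Fin i => σ j)))) ∧
    (∀ η : List ℕ, FamKInconsistent kk fun (j : ℕ) (xx : Fin k → W) =>
      φ.Realize (Sum.elim xx (bt (η ++ [j]))))

/-- The formula `φ(x̄, ȳ)` has SOP₁, witnessed in `W`. -/
def FormulaSOP1In (L' : FirstOrder.Language.{x, y}) (W : Type z) [L'.Structure W]
    {k n : ℕ} (φ : L'.Formula (Fin k ⊕ Fin n)) : Prop :=
  ∃ bt : List Bool → Fin n → W,
    (∀ σ : ℕ → Bool, FamConsistent fun (i : ℕ) (xx : Fin k → W) =>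
      φ.Realize (Sum.elim xx (bt (List.ofFn fun j : Fin i => σ j)))) ∧
    (∀ η₁ η₂ : List Bool, (η₁ ++ [false]) <+: η₂ →
      ¬∃ xx : Fin k → W, φ.Realize (Sum.elim xx (bt η₂)) ∧
        φ.Realize (Sum.elim xx (bt (η₁ ++ [true]))))

/-- Longest common prefix (meet in the tree `2^{<ω}`). -/
def meet : List Bool → List Bool → List Bool
  | a :: as, b :: bs => if a = b then a :: meet as bs else []
  | _, _ => []

/-- Strict tree order (strict prefix) on `2^{<ω}`. -/
def StrictPrefix (η ν : List Bool) : Prop := η <+: ν ∧ η ≠ ν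

/-- Lexicographic order on `2^{<ω}`. -/
def LexLt (η ν : List Bool) : Prop :=
  StrictPrefix η ν ∨ ((meet η ν ++ [false]) <+: η ∧ (meet η ν ++ [true]) <+: ν)

/-- The meet `c 0 ∧ … ∧ c k`. -/
def meetInit (c : ℕ → List Bool) : ℕ → List Bool
  | 0 => c 0
  | k + 1 => meet (meetInit c k) (c (k + 1))

/-- `c 0, …, c (l-1)` is a descending comb: a lexicographically increasing antichain
whose successive meets form a strictly descending chain in the tree order. -/
def IsDescendingComb (l : ℕ) (c : ℕ → List Bool) : Prop :=
  (∀ i j, i < l → j < l → i ≠ j → ¬(c i <+: c j)) ∧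
  (∀ i j, i < j → j < l → LexLt (c i) (c j)) ∧
  (∀ k, k + 1 < l → StrictPrefix (meetInit c (k + 1)) (meetInit c k))

section DCTP

variable (L : FirstOrder.Language.{u, v}) (𝕄 : Type w) [L.Structure 𝕄]

/-- `T` has `k`-DCTP₂. -/
def HasKDCTP2 (k : ℕ) : Prop :=
  ∃ (kx ny : ℕ) (φ : ParamFormula L 𝕄 (Fin kx ⊕ Fin ny)) (b : List Bool → Fin ny → 𝕄),
    (∀ σ : ℕ → Bool, FamKInconsistent k fun (n : ℕ) (xx : Fin kx → 𝕄) =>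
      (φ.subst (b (List.ofFn fun i : Fin n => σ i))).Realize xx) ∧
    (∀ (l : ℕ) (c : ℕ → List Bool), IsDescendingComb l c →
      ∃ xx : Fin kx → 𝕄, ∀ i < l, (φ.subst (b (c i))).Realize xx)

/-- `T` is N-ω-DCTP₂: it does not have `k`-DCTP₂ for any `k`. -/
def NOmegaDCTP2 : Prop := ∀ k : ℕ, ¬HasKDCTP2 L 𝕄 k

/-- A generic triple of sets of realizations of three partial types: the three sets
begin mutually indiscernible invariant Morley sequences over `M`. -/
def GenericTriple (M : Set 𝕄) {ι₁ ι₂ ι₃ : Type w} {nv₁ nv₂ nv₃ : ℕ}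
    (A : ι₁ → Fin nv₁ → 𝕄) (B : ι₂ → Fin nv₂ → 𝕄) (C : ι₃ → Fin nv₃ → 𝕄) : Prop :=
  ∃ (IA : ℕ → ι₁ → Fin nv₁ → 𝕄) (IB : ℕ → ι₂ → Fin nv₂ → 𝕄) (IC : ℕ → ι₃ → Fin nv₃ → 𝕄),
    IA 0 = A ∧ IB 0 = B ∧ IC 0 = C ∧
    IsInvMorleyOver L 𝕄 M (fun i => flat (IA i)) ∧
    IsInvMorleyOver L 𝕄 M (fun i => flat (IB i)) ∧
    IsInvMorleyOver L 𝕄 M (fun i => flat (IC i)) ∧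
    IndiscernibleOver L 𝕄
      (M ∪ Set.range (flat fun i => flat (IB i)) ∪ Set.range (flat fun i => flat (IC i)))
      (fun i => flat (IA i)) ∧
    IndiscernibleOver L 𝕄
      (M ∪ Set.range (flat fun i => flat (IA i)) ∪ Set.range (flat fun i => flat (IC i)))
      (fun i => flat (IB i)) ∧
    IndiscernibleOver L 𝕄
      (M ∪ Set.range (flat fun i => flat (IA i)) ∪ Set.range (flat fun i => flat (IB i)))
      (fun i => flat (IC i))

end DCTP

/-- The language of hypergraph sequences: one `n`-ary relation symbol for each `n`. -/
def hgLang : FirstOrder.Language.{0, 0} := ⟨fun _ => Empty, fun _ => PUnit⟩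

section Hypergraph

variable (V : Type z) [hgLang.Structure V]

/-- The `n`-ary edge relation of a hypergraph sequence. -/
def hgRel {n : ℕ} (v : Fin n → V) : Prop :=
  @Structure.RelMap hgLang V _ n PUnit.unit v

/-- A family of vertices is a clique: every tuple of its members is an edge. -/
def IsClique {ι : Type*} (a : ι → V) : Prop :=
  ∀ (n : ℕ) (f : Fin n → ι), hgRel V fun j => a (f j)

/-- A family of vertices is a `k`-anticlique: no `k`-tuple of its members (with
pairwise distinct indices) is an edge. -/
def IsAnticlique (k : ℕ) {ι : Type*} (a : ι → V) : Prop :=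
  ∀ f : Fin k → ι, Function.Injective f → ¬hgRel V fun j => a (f j)

/-- The hypergraph sequence has MTP. -/
def HasMTP : Prop :=
  ∃ (k : ℕ) (bt : List ℕ → V),
    (∀ σ : ℕ → ℕ, IsClique V fun n : ℕ => bt (List.ofFn fun j : Fin n => σ j)) ∧
    (∀ η : List ℕ, IsAnticlique V k fun n : ℕ => bt (η ++ [n]))

/-- The hypergraph sequence has an `(ω, ω, 1)`-array. -/
def HasOmegaArray : Prop :=
  ∃ (k : ℕ) (bt : ℕ → ℕ → V),
    (∀ i : ℕ, IsClique V (bt i)) ∧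
    (∀ σ : ℕ → ℕ, IsAnticlique V k fun i : ℕ => bt i (σ i))

/-- The hypergraph sequence has MSOP₁. -/
def HasMSOP1 : Prop :=
  ∃ bt : List Bool → V,
    (∀ σ : ℕ → Bool, IsClique V fun n : ℕ => bt (List.ofFn fun j : Fin n => σ j)) ∧
    (∀ η₁ η₂ : List Bool, (η₁ ++ [false]) <+: η₂ →
      IsAnticlique V 2 ![bt η₂, bt (η₁ ++ [true])])

/-- The hypergraph sequence has ω-MDCTP₂. -/
def HasOmegaMDCTP2 : Prop :=
  ∃ (k : ℕ) (bt : List Bool → V),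
    (∀ σ : ℕ → Bool, IsAnticlique V k fun n : ℕ => bt (List.ofFn fun j : Fin n => σ j)) ∧
    (∀ (l : ℕ) (c : ℕ → List Bool), IsDescendingComb l c →
      IsClique V fun i : Fin l => bt (c i))

/-- The hypergraph sequence has the compatible order property. -/
def HasCompatibleOrderProperty : Prop :=
  ∃ c d : ℕ → V,
    (∀ m n : ℕ, m < n →
      IsClique V fun i : Fin (n + 1) => if (i : ℕ) ≤ m then d i else c i) ∧
    (∀ m n : ℕ, m < n → ¬hgRel V ![c m, d n])

end Hypergraph

/-- An abstract system of definable (with parameters) predicates. -/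
structure DefSys (V : Type w) where
  Dfn : ∀ {I : Type}, ((I → V) → Prop) → Prop
  tru : ∀ {I : Type}, Dfn (fun _ : I → V => True)
  and : ∀ {I : Type} {P Q : (I → V) → Prop}, Dfn P → Dfn Q → Dfn (fun w => P w ∧ Q w)
  not : ∀ {I : Type} {P : (I → V) → Prop}, Dfn P → Dfn (fun w => ¬ P w)
  ex : ∀ {I U : Type} {P : (U → V) → (I → V) → Prop},
    Dfn (fun w : I ⊕ U → V => P (fun k => w (Sum.inr k)) (fun i => w (Sum.inl i))) →
    Dfn (fun w => ∃ k, P k w)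
  sub : ∀ {I J : Type} {P : (J → V) → Prop} (f : J → I ⊕ V), Dfn P →
    Dfn (fun w : I → V => P (fun j => Sum.elim w id (f j)))

/-- coordinate projections and constants -/
def IsProj {I : Type} {V : Type w} (g : (I → V) → V) : Prop :=
  (∃ i, ∀ w, g w = w i) ∨ (∃ c, ∀ w, g w = c)

theorem IsProj.coord {I : Type} {V : Type w} (i : I) : IsProj (fun w : I → V => w i) :=
  Or.inl ⟨i, fun _ => rfl⟩

theorem IsProj.const {I : Type} {V : Type w} (c : V) : IsProj (fun _ : I → V => c) :=
  Or.inr ⟨c, fun _ => rfl⟩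

theorem IsProj.comp {I J : Type} {V : Type w} {g : (J → V) → V} (hg : IsProj g)
    {h : J → (I → V) → V} (hh : ∀ j, IsProj (h j)) : IsProj (fun w => g (fun j => h j w)) := by
  rcases hg with ⟨i, hi⟩ | ⟨c, hc⟩
  · simpa only [hi] using hh i
  · exact Or.inr ⟨c, fun w => hc _⟩

namespace DefSys
variable {V : Type w} (D : DefSys V)

theorem comp {I J : Type} {P : (J → V) → Prop} (h : D.Dfn P) {g : J → (I → V) → V}
    (hg : ∀ j, IsProj (g j)) : D.Dfn (fun w => P (fun j => g j w)) := by
  have : ∀ j, ∃ f : I ⊕ V, ∀ w, g j w = Sum.elim w id f := by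
    intro j
    rcases hg j with ⟨i, hi⟩ | ⟨c, hc⟩
    · exact ⟨Sum.inl i, fun w => by simp [hi]⟩
    · exact ⟨Sum.inr c, fun w => by simp [hc]⟩
  choose f hf using this
  have h2 := D.sub f h
  convert h2 using 4
  exact hf _ _

theorem or {I : Type} {P Q : (I → V) → Prop} (hP : D.Dfn P) (hQ : D.Dfn Q) :
    D.Dfn (fun w => P w ∨ Q w) := by
  have := D.not (D.and (D.not hP) (D.not hQ))
  convert this using 2
  tauto

theorem imp {I : Type} {P Q : (I → V) → Prop} (hP : D.Dfn P) (hQ : D.Dfn Q) :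
    D.Dfn (fun w => P w → Q w) := by
  have := D.not (D.and hP (D.not hQ))
  convert this using 2
  tauto

theorem const {I : Type} (p : Prop) : D.Dfn (fun _ : I → V => p) := by
  by_cases h : p
  · simpa [h] using D.tru
  · simpa [h] using D.not (D.tru (I := I))

theorem list_all {I : Type} {β : Type*} (l : List β) {P : β → (I → V) → Prop}
    (h : ∀ b ∈ l, D.Dfn (P b)) : D.Dfn (fun w => ∀ b ∈ l, P b w) := by
  induction l with
  | nil => simpa using D.tru
  | cons a l ih =>
    have := D.and (h a (by simp)) (ih fun b hb => h b (by simp [hb]))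
    simpa using this

theorem all_fin {I K : Type} [Finite K] {P : K → (I → V) → Prop}
    (h : ∀ b, D.Dfn (P b)) : D.Dfn (fun w => ∀ b, P b w) := by
  cases nonempty_fintype K
  have := D.list_all (Finset.univ : Finset K).toList (P := P) (fun b _ => h b)
  simpa using this

/-- `c` is a definable predicate of one variable -/
def Dfn1 (P : V → Prop) : Prop := D.Dfn (fun w : Unit → V => P (w ()))

theorem Dfn1.comp {P : V → Prop} (h : D.Dfn1 P) {I : Type} {g : (I → V) → V} (hg : IsProj g) :
    D.Dfn (fun w => P (g w)) :=
  DefSys.comp D h (g := fun _ => g) (fun _ => hg)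

/-- Definability of predicates of lists and tuples. -/
def DfnL {ι : Type} (Ψ : List V → (ι → V) → Prop) : Prop :=
  ∀ l : ℕ, D.Dfn (fun w : Fin l ⊕ ι → V =>
    Ψ (List.ofFn fun i => w (Sum.inl i)) (fun i => w (Sum.inr i)))

theorem DfnL.comp {D : DefSys V} {ι I : Type} {Ψ : List V → (ι → V) → Prop} (h : D.DfnL Ψ)
    (gs : List ((I → V) → V)) (hgs : ∀ g ∈ gs, IsProj g) (k : ι → (I → V) → V)
    (hk : ∀ i, IsProj (k i)) :
    D.Dfn (fun w => Ψ (gs.map fun g => g w) (fun i => k i w)) := by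
  have := D.comp (h gs.length) (g := Sum.elim (fun i w => gs[i] w) k) (by
    rintro (i | i)
    · exact hgs _ (by simp)
    · exact hk i)
  have e : ∀ w, (gs.map fun g => g w) = List.ofFn fun i : Fin gs.length => gs[i] w := by
    intro w
    apply List.ext_getElem <;> simp
  simp only [e]
  exact this

/-- definability depends only on the agreement on parametric sets -/
theorem DfnL.comp' {D : DefSys V} {ι I : Type} {Ψ : List V → (ι → V) → Prop} (h : D.DfnL Ψ)
    {β : Type*} (l : List β) (g : β → (I → V) → V) (hgs : ∀ b ∈ l, IsProj (g b))
    (k : ι → (I → V) → V) (hk : ∀ i, IsProj (k i)) :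
    D.Dfn (fun w => Ψ (l.map fun b => g b w) (fun i => k i w)) := by
  have := h.comp (l.map g) (by simpa using hgs) k hk
  simpa [Function.comp_def] using this

end DefSys

/-- Iterated generic choice; the first ultrafilter of the list is picked first. -/
noncomputable def gen {V : Type w} : List (Ultrafilter V) → Ultrafilter (List V)
  | [] => pure []
  | U :: Us => U.bind fun x => (gen Us).map (x :: ·)

theorem ev_list {β γ : Type*} {f : Filter γ} (l : List β) {P : β → γ → Prop}
    (h : ∀ b ∈ l, ∀ᶠ c in f, P b c) : ∀ᶠ c in f, ∀ b ∈ l, P b c := by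
  induction l with
  | nil => simp
  | cons a l ih =>
    filter_upwards [h a (by simp), ih fun b hb => h b (by simp [hb])] with c h1 h2
    simpa using ⟨h1, h2⟩

theorem gen_nil {V : Type w} {P : List V → Prop} :
    (∀ᶠ L in (gen ([] : List (Ultrafilter V)) : Filter (List V)), P L) ↔ P [] := by
  simp only [gen]
  exact Iff.rfl

theorem gen_cons {V : Type w} {U : Ultrafilter V} {Us : List (Ultrafilter V)}
    {P : List V → Prop} :
    (∀ᶠ L in (gen (U :: Us) : Filter (List V)), P L) ↔
      ∀ᶠ x in (U : Filter V), ∀ᶠ L in (gen Us : Filter (List V)), P (x :: L) := by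
  simp only [gen]
  exact Iff.rfl

theorem gen_append {V : Type w} {Us Us' : List (Ultrafilter V)} {P : List V → Prop} :
    (∀ᶠ L in (gen (Us ++ Us') : Filter (List V)), P L) ↔
      ∀ᶠ L in (gen Us : Filter (List V)), ∀ᶠ L' in (gen Us' : Filter (List V)), P (L ++ L') := by
  induction Us generalizing P with
  | nil => simp [gen_nil]
  | cons U Us ih => simp [gen_cons, ih]

theorem gen_length {V : Type w} (Us : List (Ultrafilter V)) :
    ∀ᶠ L in (gen Us : Filter (List V)), L.length = Us.length := by
  induction Us with
  | nil => simp [gen_nil]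
  | cons U Us ih => simpa [gen_cons] using ih

theorem gen_all {V : Type w} (p : Ultrafilter V) (n : ℕ) {P : V → Prop}
    (h : ∀ᶠ x in (p : Filter V), P x) :
    ∀ᶠ L in (gen (List.replicate n p) : Filter (List V)), ∀ x ∈ L, P x := by
  induction n with
  | zero => simp [gen_nil]
  | succ n ih =>
    rw [List.replicate_succ, gen_cons]
    filter_upwards [h] with x hx
    filter_upwards [ih] with L hL
    simpa using ⟨hx, hL⟩

section WA
variable {V : Type w}

/-- A finite SOP₁ tree of depth `d`. -/
def SOPTree {U E : Type} (θ : (U → V) → (E → V) → Prop) (d : ℕ) (t : List Bool → E → V) : Prop :=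
  (∀ σ : List Bool, σ.length = d → ∃ k, ∀ η, η <+: σ → η ≠ [] → θ k (t η)) ∧
  (∀ e1 e2 : List Bool, (e1 ++ [false]) <+: e2 → e2.length ≤ d →
    ¬ ∃ k, θ k (t e2) ∧ θ k (t (e1 ++ [true])))

/-- NSOP₁ for a definability system, finite form. -/
def DefSys.NSOP (D : DefSys V) : Prop :=
  ∀ {U E : Type} (θ : (U → V) → (E → V) → Prop),
    D.Dfn (fun w : U ⊕ E → V => θ (fun i => w (Sum.inl i)) (fun i => w (Sum.inr i))) →
    ∃ d, ¬ ∃ t, SOPTree θ d t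

/-- incompatibility -/
def Inc {U E : Type} (θ : (U → V) → (E → V) → Prop) (c c' : E → V) : Prop :=
  ¬ ∃ k, θ k c ∧ θ k c'

def DT {U E : Type} (θ : (U → V) → (E → V) → Prop) : ℕ → List (E → V) → List (E → V) → Prop
  | 0, A, _ => ∃ k, ∀ a ∈ A, θ k a
  | d + 1, A, F => ∃ c0 c1 : E → V, (∀ f ∈ F, Inc θ c0 f) ∧ (∀ f ∈ F, Inc θ c1 f) ∧
      Inc θ c0 c1 ∧ DT θ d (c0 :: A) (c1 :: F) ∧ DT θ d (c1 :: A) F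

def goodQ {U E : Type} (θ : (U → V) → (E → V) → Prop) (Q : Ultrafilter (E → V)) :
    ℕ → List (E → V) → Prop
  | 0, A => ∃ k, ∀ a ∈ A, θ k a
  | d + 1, A => ∀ᶠ c in (Q : Filter (E → V)), goodQ θ Q d (c :: A)

variable (D : DefSys V)

theorem Dfn_theta {U E : Type} {θ : (U → V) → (E → V) → Prop}
    (hθ : D.Dfn (fun w : U ⊕ E → V => θ (fun i => w (Sum.inl i)) (fun i => w (Sum.inr i))))
    {I : Type} {g : U → (I → V) → V} {h : E → (I → V) → V} (hg : ∀ i, IsProj (g i))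
    (hh : ∀ i, IsProj (h i)) : D.Dfn (fun w => θ (fun i => g i w) (fun i => h i w)) :=
  D.comp hθ (g := Sum.elim g h) (by rintro (i | i) <;> simp [hg, hh])

theorem Dfn_Inc {U E : Type} {θ : (U → V) → (E → V) → Prop}
    (hθ : D.Dfn (fun w : U ⊕ E → V => θ (fun i => w (Sum.inl i)) (fun i => w (Sum.inr i))))
    {I : Type} {g h : E → (I → V) → V} (hg : ∀ i, IsProj (g i))
    (hh : ∀ i, IsProj (h i)) : D.Dfn (fun w => Inc θ (fun i => g i w) (fun i => h i w)) := by
  refine D.not (D.ex (P := fun k w => θ k (fun i => g i w) ∧ θ k (fun i => h i w)) (D.and ?_ ?_))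
  · exact Dfn_theta D hθ (fun i => IsProj.coord _) (fun i => (hg i).comp fun j => IsProj.coord _)
  · exact Dfn_theta D hθ (fun i => IsProj.coord _) (fun i => (hh i).comp fun j => IsProj.coord _)

theorem Dfn_DT {U E : Type} {θ : (U → V) → (E → V) → Prop}
    (hθ : D.Dfn (fun w : U ⊕ E → V => θ (fun i => w (Sum.inl i)) (fun i => w (Sum.inr i))))
    (d : ℕ) : ∀ {I : Type} (As Fs : List (E → (I → V) → V)),
    (∀ a ∈ As, ∀ i, IsProj (a i)) → (∀ a ∈ Fs, ∀ i, IsProj (a i)) →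
    D.Dfn (fun w => DT θ d (As.map fun a i => a i w) (Fs.map fun a i => a i w)) := by
  induction d with
  | zero =>
    intro I As Fs hA hF
    simp only [DT, List.mem_map, forall_exists_index, and_imp, forall_apply_eq_imp_iff₂]
    refine D.ex (P := fun k w => ∀ a ∈ As, θ k (fun i => a i w)) (D.list_all _ fun a ha => ?_)
    exact Dfn_theta D hθ (fun i => IsProj.coord _)
      (fun i => (hA a ha i).comp fun j => IsProj.coord _)
  | succ d ih =>
    intro I As Fs hA hF
    have hl : ∀ (a : E → (I → V) → V), (∀ i, IsProj (a i)) → ∀ i,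
      IsProj (fun w : (I ⊕ E) ⊕ E → V => a i (fun j => w (Sum.inl (Sum.inl j)))) :=
      fun a ha i => (ha i).comp fun j => IsProj.coord _
    simp only [DT, List.mem_map, forall_exists_index, and_imp, forall_apply_eq_imp_iff₂]
    refine D.ex (P := fun c0 w => ∃ c1, (∀ a ∈ Fs, Inc θ c0 (fun i => a i w)) ∧
      (∀ a ∈ Fs, Inc θ c1 (fun i => a i w)) ∧ Inc θ c0 c1 ∧
      DT θ d (c0 :: As.map fun a i => a i w) (c1 :: Fs.map fun a i => a i w) ∧
      DT θ d (c1 :: As.map fun a i => a i w) (Fs.map fun a i => a i w)) ?_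
    refine D.ex (P := fun c1 w => (∀ a ∈ Fs, Inc θ (fun k => w (Sum.inr k))
        (fun i => a i fun i => w (Sum.inl i))) ∧
      (∀ a ∈ Fs, Inc θ c1 (fun i => a i fun i => w (Sum.inl i))) ∧
      Inc θ (fun k => w (Sum.inr k)) c1 ∧
      DT θ d ((fun k => w (Sum.inr k)) :: As.map fun a i => a i fun i => w (Sum.inl i))
        (c1 :: Fs.map fun a i => a i fun i => w (Sum.inl i)) ∧
      DT θ d (c1 :: As.map fun a i => a i fun i => w (Sum.inl i))
        (Fs.map fun a i => a i fun i => w (Sum.inl i))) ?_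
    refine D.and (D.list_all _ fun a ha => Dfn_Inc D hθ (fun i => IsProj.coord _)
      (hl a (hF a ha))) (D.and (D.list_all _ fun a ha => Dfn_Inc D hθ (fun i => IsProj.coord _)
      (hl a (hF a ha))) (D.and (Dfn_Inc D hθ (fun i => IsProj.coord _) (fun i => IsProj.coord _))
      (D.and ?_ ?_)))
    · have := ih (I := (I ⊕ E) ⊕ E)
        ((fun k w => w (Sum.inl (Sum.inr k))) ::
          As.map fun a i w => a i (fun j => w (Sum.inl (Sum.inl j))))
        ((fun k w => w (Sum.inr k)) ::
          Fs.map fun a i w => a i (fun j => w (Sum.inl (Sum.inl j)))) (by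
          simp only [List.mem_cons, List.mem_map]
          rintro a (rfl | ⟨b, hb, rfl⟩) i
          · exact IsProj.coord _
          · exact hl b (hA b hb) i) (by
          simp only [List.mem_cons, List.mem_map]
          rintro a (rfl | ⟨b, hb, rfl⟩) i
          · exact IsProj.coord _
          · exact hl b (hF b hb) i)
      simpa [Function.comp_def] using this
    · have := ih (I := (I ⊕ E) ⊕ E)
        ((fun k w => w (Sum.inr k)) ::
          As.map fun a i w => a i (fun j => w (Sum.inl (Sum.inl j))))
        (Fs.map fun a i w => a i (fun j => w (Sum.inl (Sum.inl j)))) (by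
          simp only [List.mem_cons, List.mem_map]
          rintro a (rfl | ⟨b, hb, rfl⟩) i
          · exact IsProj.coord _
          · exact hl b (hA b hb) i) (by
          simp only [List.mem_map]
          rintro a (⟨b, hb, rfl⟩) i
          exact hl b (hF b hb) i)
      simpa [Function.comp_def] using this

theorem DT_tree [Nonempty V] {U E : Type} {θ : (U → V) → (E → V) → Prop} (d : ℕ) :
    ∀ (A F : List (E → V)), DT θ d A F → ∃ t : List Bool → E → V,
      (∀ σ : List Bool, σ.length = d → ∃ k, (∀ a ∈ A, θ k a) ∧
        ∀ η, η <+: σ → η ≠ [] → θ k (t η)) ∧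
      (∀ e : List Bool, e ≠ [] → e.length ≤ d → ∀ f ∈ F, Inc θ (t e) f) ∧
      (∀ e1 e2 : List Bool, (e1 ++ [false]) <+: e2 → e2.length ≤ d →
        Inc θ (t e2) (t (e1 ++ [true]))) := by
  induction d with
  | zero =>
    rintro A F ⟨k, hk⟩
    obtain ⟨e0⟩ : Nonempty (E → V) := inferInstance
    refine ⟨fun _ => e0, ?_, ?_, ?_⟩
    · intro σ hσ
      refine ⟨k, hk, ?_⟩
      intro η h1 h2
      rw [List.length_eq_zero_iff] at hσ
      subst hσ
      simp at h1
      exact absurd h1 h2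
    · intro e h1 h2
      simp at h2
      exact absurd h2 h1
    · intro e1 e2 h1 h2
      have := h1.length_le
      simp at this
      omega
  | succ d ih =>
    rintro A F ⟨c0, c1, h0, h1, h01, hD0, hD1⟩
    obtain ⟨t0, a0, b0, s0⟩ := ih _ _ hD0
    obtain ⟨t1, a1, b1, s1⟩ := ih _ _ hD1
    refine ⟨fun e => match e with
      | [] => c0
      | [false] => c0
      | [true] => c1
      | false :: b :: r => t0 (b :: r)
      | true :: b :: r => t1 (b :: r), ?_, ?_, ?_⟩
    · rintro (_ | ⟨_ | _, σ⟩) hσ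
      · simp at hσ
      · obtain ⟨k, hk1, hk2⟩ := a0 σ (by simpa using hσ)
        refine ⟨k, fun a ha => hk1 a (by simp [ha]), ?_⟩
        rintro (_ | ⟨x, _ | ⟨b, r⟩⟩) h1 h2
        · exact absurd rfl h2
        · simp at h1; subst h1; exact hk1 _ (by simp)
        · rw [List.cons_prefix_cons] at h1
          obtain ⟨rfl, h1⟩ := h1
          exact hk2 _ h1 (by simp)
      · obtain ⟨k, hk1, hk2⟩ := a1 σ (by simpa using hσ)
        refine ⟨k, fun a ha => hk1 a (by simp [ha]), ?_⟩
        rintro (_ | ⟨x, _ | ⟨b, r⟩⟩) h1 h2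
        · exact absurd rfl h2
        · simp at h1; subst h1; exact hk1 _ (by simp)
        · rw [List.cons_prefix_cons] at h1
          obtain ⟨rfl, h1⟩ := h1
          exact hk2 _ h1 (by simp)
    · rintro (_ | ⟨_ | _, _ | ⟨b, r⟩⟩) h2 h3 f hf
      · exact absurd rfl h2
      · exact h0 f hf
      · exact b0 (b :: r) (by simp) (by simpa using h3) f (by simp [hf])
      · exact h1 f hf
      · exact b1 (b :: r) (by simp) (by simpa using h3) f (by simp [hf])
    · rintro (_ | ⟨x, e1⟩) (_ | ⟨y, _ | ⟨b, r⟩⟩) h2 h3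
      · simp at h2
      · simp at h2; subst h2; exact h01
      · simp at h2; subst h2; exact b0 (b :: r) (by simp) (by simpa using h3) c1 (by simp)
      · simp at h2
      · simp at h2
      · rw [List.cons_append, List.cons_prefix_cons] at h2
        obtain ⟨rfl, h2⟩ := h2
        obtain ⟨b', r', he⟩ : ∃ b' r', e1 ++ [true] = b' :: r' :=
          List.exists_cons_of_ne_nil (by simp)
        cases x
        · have := s0 e1 (b :: r) h2 (by simpa using h3)
          simp only [List.cons_append, he] at this ⊢
          exact this
        · have := s1 e1 (b :: r) h2 (by simpa using h3)
          simp only [List.cons_append, he] at this ⊢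
          exact this

theorem WA [Nonempty V] {U E : Type} {θ : (U → V) → (E → V) → Prop}
    (hθ : D.Dfn (fun w : U ⊕ E → V => θ (fun i => w (Sum.inl i)) (fun i => w (Sum.inr i))))
    (Q R : Ultrafilter (E → V))
    (hQR : ∀ P : (E → V) → Prop, D.Dfn P → (∀ᶠ c in (Q : Filter _), P c) →
      ∀ᶠ c in (R : Filter _), P c)
    (hinc : ∀ᶠ c1 in (R : Filter _), ∀ᶠ c0 in (Q : Filter _), Inc θ c0 c1) (d : ℕ)
    (hd : goodQ θ Q d []) : ∃ t, SOPTree θ d t := by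
  have key : ∀ (d : ℕ) (A F : List (E → V)), goodQ θ Q d A →
      (∀ f ∈ F, ∀ᶠ c in (Q : Filter _), Inc θ c f) → DT θ d A F := by
    intro d
    induction d with
    | zero => exact fun A F h _ => h
    | succ d ih =>
      intro A F hA hF
      have hF' : ∀ᶠ c in (Q : Filter _), ∀ f ∈ F, Inc θ c f := ev_list F hF
      have e1 : ∀ᶠ c in (R : Filter _), DT θ d (c :: A) F := by
        refine hQR _ ?_ ?_
        · have := Dfn_DT D hθ d (I := E) ((fun k w => w k) :: A.map fun a i _ => a i)
            (F.map fun a i _ => a i) (by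
              simp only [List.mem_cons, List.mem_map]
              rintro a (rfl | ⟨b, hb, rfl⟩) i
              · exact IsProj.coord _
              · exact IsProj.const _) (by
              simp only [List.mem_map]
              rintro a (⟨b, hb, rfl⟩) i
              exact IsProj.const _)
          simpa [Function.comp_def] using this
        · filter_upwards [hA] with c hc
          exact ih _ _ hc hF
      have e2 : ∀ᶠ c in (R : Filter _), ∀ f ∈ F, Inc θ c f := by
        refine hQR _ ?_ hF'
        exact D.list_all _ fun f _ => Dfn_Inc D hθ (g := fun i w => w i) (h := fun i _ => f i)
          (fun i => IsProj.coord _) (fun i => IsProj.const _)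
      obtain ⟨c1, h1, h2, h3⟩ := (e1.and (e2.and hinc)).exists
      have hA' : ∀ᶠ c in (Q : Filter _), goodQ θ Q d (c :: A) := hA
      obtain ⟨c0, h4, h5, h6⟩ := (hA'.and (hF'.and h3)).exists
      refine ⟨c0, c1, h5, h2, h6, ih _ _ h4 ?_, h1⟩
      intro f hf
      rcases List.mem_cons.1 hf with rfl | hf
      · exact h3
      · exact hF f hf
  obtain ⟨t, h1, h2, h3⟩ := DT_tree d [] [] (key d [] [] hd (by simp))
  refine ⟨t, ?_, ?_⟩
  · intro σ hσ
    obtain ⟨k, _, hk⟩ := h1 σ hσ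
    exact ⟨k, hk⟩
  · exact h3

end WA

section KL
variable {V : Type w} (D : DefSys V)

/-- agreement of ultrafilters on definable sets -/
def DefSys.Agree (p q : Ultrafilter V) : Prop :=
  ∀ P : V → Prop, D.Dfn1 P → (∀ᶠ x in (p : Filter V), P x) → ∀ᶠ x in (q : Filter V), P x

theorem getD_all {L : List V} {d : V} {P : V → Prop} :
    (∀ i < L.length, P (L.getD i d)) ↔ ∀ x ∈ L, P x := by
  constructor
  · intro h x hx
    obtain ⟨i, hi, rfl⟩ := List.getElem_of_mem hx
    have := h i hi
    rwa [List.getD_eq_getElem _ _ hi] at this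
  · intro h i hi
    rw [List.getD_eq_getElem _ _ hi]
    exact h _ (List.getElem_mem hi)

theorem KL [Nonempty V] (hN : D.NSOP) (p q : Ultrafilter V) (hpq : D.Agree p q)
    {U : Type} {φ : V → (U → V) → Prop}
    (hφ : D.Dfn (fun w : Unit ⊕ U → V => φ (w (Sum.inl ())) (fun i => w (Sum.inr i))))
    (h : ∀ n, ∀ᶠ L in (gen (List.replicate n p) : Filter (List V)), ∃ k, ∀ x ∈ L, φ x k) :
    ∀ n, ∀ᶠ L in (gen (List.replicate n q) : Filter (List V)), ∃ k, ∀ x ∈ L, φ x k := by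
  obtain ⟨v0⟩ := ‹Nonempty V›
  have G : ∀ j l, ∀ᶠ L in (gen (List.replicate j q ++ List.replicate l p) : Filter (List V)),
      ∃ k, ∀ x ∈ L, φ x k := by
    intro j
    induction j with
    | zero => simpa using h
    | succ j ih =>
      intro l
      by_contra hcon
      have hcon1 : ∀ᶠ X in (gen (List.replicate j q) : Filter (List V)),
          ∀ᶠ c in (q : Filter V), ∀ᶠ e in (gen (List.replicate (l + 1) p) : Filter (List V)),
          ¬ ∃ k, ∀ x ∈ X ++ c :: e, φ x k := by
        rw [← Ultrafilter.eventually_not, List.replicate_succ', List.append_assoc, gen_append]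
          at hcon
        filter_upwards [hcon] with X hX
        rw [List.singleton_append, gen_cons] at hX
        filter_upwards [hX] with c hc
        rw [List.replicate_succ', gen_append]
        filter_upwards [hc] with e he
        refine Filter.Eventually.of_forall fun e' => ?_
        rintro ⟨k, hk⟩
        exact he ⟨k, fun x hx => hk x (by
          simp only [List.mem_append, List.mem_cons] at hx ⊢; tauto)⟩
      set θ : (U → V) → ((ℕ ⊕ ℕ) → V) → Prop := fun k e =>
        (∀ i ∈ List.range j, φ (e (Sum.inl i)) k) ∧
        (∀ i ∈ List.range (l + 1), φ (e (Sum.inr i)) k) with hθdef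
      have hφ' : ∀ {I : Type} (g : (I → V) → V) (k : U → (I → V) → V), IsProj g →
          (∀ i, IsProj (k i)) → D.Dfn (fun w => φ (g w) (fun i => k i w)) := by
        intro I g k hg hk
        exact D.comp hφ (g := Sum.elim (fun _ => g) k) (by rintro (i | i) <;> simp [hg, hk])
      obtain ⟨d, hd⟩ := hN θ (by
        refine D.and (D.list_all _ fun i _ => ?_) (D.list_all _ fun i _ => ?_)
        · exact hφ' _ (fun i w => w (Sum.inl i)) (IsProj.coord _) fun i => IsProj.coord _
        · exact hφ' _ (fun i w => w (Sum.inl i)) (IsProj.coord _) fun i => IsProj.coord _)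
      have ih' := ih (d * (l + 1))
      rw [gen_append] at ih'
      obtain ⟨X, hX1, hX2, hX3⟩ := (ih'.and (hcon1.and (gen_length _))).exists
      rw [List.length_replicate] at hX3
      set f : List V → ℕ → V := fun L i => L.getD i v0 with hf
      set θX : (U → V) → (ℕ → V) → Prop := fun k e =>
        (∀ x ∈ X, φ x k) ∧ (∀ i ∈ List.range (l + 1), φ (e i) k) with hθX
      have hθXd : D.Dfn (fun w : U ⊕ ℕ → V =>
          θX (fun i => w (Sum.inl i)) (fun i => w (Sum.inr i))) := by
        refine D.and (D.list_all _ fun i _ => ?_) (D.list_all _ fun i _ => ?_)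
        · exact hφ' _ (fun i w => w (Sum.inl i)) (IsProj.const _) fun i => IsProj.coord _
        · exact hφ' _ (fun i w => w (Sum.inl i)) (IsProj.coord _) fun i => IsProj.coord _
      have hθL : ∀ (L : List V) k, L.length = l + 1 →
          (θX k (f L) ↔ (∀ x ∈ X, φ x k) ∧ ∀ x ∈ L, φ x k) := by
        intro L k hL
        simp only [hθX, hf, List.mem_range, ← hL]
        rw [getD_all (P := fun x => φ x k)]
      set Q := (gen (List.replicate (l + 1) p)).map f with hQ
      set R := (gen (List.replicate l p ++ [q])).map f with hR
      have evQ : ∀ P : (ℕ → V) → Prop, (∀ᶠ c in (Q : Filter _), P c) ↔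
          ∀ᶠ L in (gen (List.replicate (l + 1) p) : Filter (List V)), P (f L) :=
        fun P => Iff.rfl
      have evR : ∀ P : (ℕ → V) → Prop, (∀ᶠ c in (R : Filter _), P c) ↔
          ∀ᶠ L in (gen (List.replicate l p ++ [q]) : Filter (List V)), P (f L) :=
        fun P => Iff.rfl
      have : ∃ t, SOPTree θX d t := by
        refine WA D hθXd Q R ?_ ?_ d ?_
        · intro P hP hPQ
          rw [evQ, List.replicate_succ', gen_append] at hPQ
          rw [evR, gen_append]
          filter_upwards [hPQ] with L hL
          rw [gen_cons] at hL ⊢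
          simp only [gen_nil] at hL ⊢
          refine hpq _ ?_ hL
          refine D.comp hP (g := fun i w => f (L ++ [w ()]) i) ?_
          intro i
          simp only [hf]
          rcases lt_trichotomy i L.length with hi | hi | hi
          · refine Or.inr ⟨L.getD i v0, fun w => ?_⟩
            beta_reduce
            rw [List.getD_append _ _ _ _ hi]
          · refine Or.inl ⟨(), fun w => ?_⟩
            beta_reduce
            rw [List.getD_append_right _ _ _ _ hi.ge]
            simp [hi]
          · refine Or.inr ⟨v0, fun w => ?_⟩
            beta_reduce
            rw [List.getD_append_right _ _ _ _ hi.le]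
            rw [List.getD_eq_default]
            simp
            omega
        · rw [evR, gen_append]
          filter_upwards [gen_length (List.replicate l p)] with L hL
          rw [gen_cons]
          simp only [gen_nil]
          filter_upwards [hX2] with c hc
          rw [evQ]
          filter_upwards [hc, gen_length (List.replicate (l + 1) p)] with e he hel
          rintro ⟨k, hk1, hk2⟩
          rw [hθL _ _ (by simpa using hel)] at hk1
          rw [hθL _ _ (by simpa using hL)] at hk2
          refine he ⟨k, fun x hx => ?_⟩
          simp only [List.mem_append, List.mem_cons] at hx
          rcases hx with hx | rfl | hx
          · exact hk1.1 x hx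
          · exact hk2.2 x (by simp)
          · exact hk1.2 x hx
        · have key : ∀ (d : ℕ) (A : List (ℕ → V)),
              (∀ᶠ M in (gen (List.replicate (d * (l + 1)) p) : Filter (List V)),
                ∃ k, (∀ x ∈ X ++ M, φ x k) ∧ ∀ a ∈ A, θX k a) → goodQ θX Q d A := by
            intro d
            induction d with
            | zero =>
              intro A hA
              simp only [Nat.zero_mul, List.replicate_zero, gen_nil] at hA
              obtain ⟨k, _, hk⟩ := hA
              exact ⟨k, hk⟩
            | succ d ihd =>
              intro A hA
              change ∀ᶠ c in (Q : Filter _), goodQ θX Q d (c :: A)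
              rw [evQ]
              rw [Nat.succ_mul, Nat.add_comm, List.replicate_add, gen_append] at hA
              filter_upwards [hA, gen_length (List.replicate (l + 1) p)] with L hL hLl
              apply ihd
              filter_upwards [hL] with M hM
              obtain ⟨k, hk1, hk2⟩ := hM
              refine ⟨k, fun x hx => hk1 x ?_, ?_⟩
              · simp only [List.mem_append] at hx ⊢; tauto
              · intro a ha
                rcases List.mem_cons.1 ha with rfl | ha
                · rw [hθL _ _ (by simpa using hLl)]
                  exact ⟨fun x hx => hk1 x (by simp [hx]), fun x hx => hk1 x (by simp [hx])⟩
                · exact hk2 a ha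
          apply key
          simpa using hX1
      obtain ⟨t, ht⟩ := this
      refine hd ⟨fun η => Sum.elim (f X) (t η), ?_⟩
      have e : ∀ k η, θ k (Sum.elim (f X) (t η)) ↔ θX k (t η) := by
        intro k η
        simp only [hθdef, hθX, Sum.elim_inl, Sum.elim_inr, hf, List.mem_range, ← hX3]
        rw [getD_all (P := fun x => φ x k)]
      simpa only [SOPTree, e] using ht
  intro n
  simpa using G n 0

end KL

/-- nodes of length less than `n` -/
def nodes : ℕ → List (List Bool)
  | 0 => []
  | n + 1 => [] :: ((nodes n).map (List.cons false) ++ (nodes n).map (List.cons true))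

/-- (reversed) descending combs of nodes of length less than `n` -/
def combs : ℕ → List (List (List Bool))
  | 0 => [ [] ]
  | n + 1 => [ [] ] :: ((combs n).map (List.map (List.cons false)) ++
      (combs n).map (List.map (List.cons true)) ++
      (nodes n).flatMap fun ν => (combs n).map fun C => (true :: ν) :: C.map (List.cons false))

def nrnodes (n : ℕ) : List (List Bool) :=
  (nodes n).map (List.cons false) ++ (nodes n).map (List.cons true)

def nrcombs (n : ℕ) : List (List (List Bool)) :=
  (combs n).map (List.map (List.cons false)) ++
      (combs n).map (List.map (List.cons true)) ++
      (nodes n).flatMap fun ν => (combs n).map fun C => (true :: ν) :: C.map (List.cons false)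

theorem nodes_succ (n : ℕ) : nodes (n + 1) = [] :: nrnodes n := rfl

theorem combs_succ (n : ℕ) : combs (n + 1) = [ [] ] :: nrcombs n := rfl

theorem mem_nodes {n : ℕ} {η : List Bool} : η ∈ nodes n ↔ η.length < n := by
  induction n generalizing η with
  | zero => simp [nodes]
  | succ n ih =>
    rcases η with _ | ⟨_ | _, η⟩ <;> simp [nodes, ih]

theorem nrnodes_ne {n : ℕ} {η : List Bool} (h : η ∈ nrnodes n) : η ≠ [] := by
  simp only [nrnodes, List.mem_append, List.mem_map] at h
  rcases h with ⟨a, _, rfl⟩ | ⟨a, _, rfl⟩ <;> simp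

theorem nrcombs_ne {n : ℕ} {C : List (List Bool)} (h : C ∈ nrcombs n) : ∀ c ∈ C, c ≠ [] := by
  simp only [nrcombs, List.mem_append, List.mem_map, List.mem_flatMap] at h
  rcases h with (⟨a, _, rfl⟩ | ⟨a, _, rfl⟩) | ⟨ν, _, a, _, rfl⟩ <;> intro c hc <;> simp at hc
  · obtain ⟨b, _, rfl⟩ := hc; simp
  · obtain ⟨b, _, rfl⟩ := hc; simp
  · rcases hc with rfl | ⟨b, _, rfl⟩ <;> simp

theorem single_mem_combs {n : ℕ} {ν : List Bool} (h : ν ∈ nodes n) : [ν] ∈ combs n := by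
  induction n generalizing ν with
  | zero => simp [nodes] at h
  | succ n ih =>
    simp only [nodes, combs, List.mem_cons, List.mem_append, List.mem_map] at h ⊢
    rcases h with rfl | ⟨a, ha, rfl⟩ | ⟨a, ha, rfl⟩
    · simp
    · exact Or.inr (Or.inl (Or.inl ⟨[a], ih ha, rfl⟩))
    · exact Or.inr (Or.inl (Or.inr ⟨[a], ih ha, rfl⟩))

theorem single_mem_nrcombs {n : ℕ} {ν : List Bool} (h : ν ∈ nrnodes n) : [ν] ∈ nrcombs n := by
  simp only [nrnodes, nrcombs, List.mem_append, List.mem_map] at h ⊢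
  rcases h with ⟨a, ha, rfl⟩ | ⟨a, ha, rfl⟩
  · exact (Or.inl (Or.inl ⟨[a], single_mem_combs ha, rfl⟩))
  · exact (Or.inl (Or.inr ⟨[a], single_mem_combs ha, rfl⟩))

section Claim
variable {V : Type w} (D : DefSys V)

def AntiOn (R : V → V → Prop) (T : List Bool → V) (N : List (List Bool)) : Prop :=
  ∀ η ∈ N, ∀ ν ∈ N, η <+: ν → η ≠ ν → ¬ R (T η) (T ν)

/-- the generic requirement -/
def Valid (p : Ultrafilter V) {ι : Type} (W : Ultrafilter (ι → V))
    (Ψ : List V → (ι → V) → Prop) : Prop :=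
  D.DfnL Ψ ∧ ∀ l, ∀ᶠ C in (gen (List.replicate l p) : Filter (List V)),
    ∀ᶠ B in (W : Filter (ι → V)), Ψ C B

def Claim (p : Ultrafilter V) (R : V → V → Prop) (n : ℕ) : Prop :=
  ∀ (ι : Type) (W : Ultrafilter (ι → V)) (Ψ : List V → (ι → V) → Prop), Valid D p W Ψ →
    ∀ᶠ B in (W : Filter (ι → V)), ∃ T : List Bool → V, AntiOn R T (nodes n) ∧
      ∀ C ∈ combs n, Ψ (C.map T) B

/-- the non root part of a tree is good for `B` -/
def Om (R : V → V → Prop) {ι : Type} (Ψ : List V → (ι → V) → Prop) (n : ℕ)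
    (T : List Bool → V) (B : ι → V) : Prop :=
  AntiOn R T (nrnodes n) ∧ ∀ C ∈ nrcombs n, Ψ (C.map T) B

theorem exists_bound {β : Type*} (l : List (List β)) : ∃ N, ∀ C ∈ l, C.length ≤ N := by
  induction l with
  | nil => exact ⟨0, by simp⟩
  | cons a l ih =>
    obtain ⟨N, hN⟩ := ih
    refine ⟨max N a.length, ?_⟩
    intro C hC
    rcases List.mem_cons.1 hC with rfl | hC
    · simp
    · exact (hN C hC).trans (by simp)

theorem lemmaD {p : Ultrafilter V} {R : V → V → Prop} {n : ℕ} (hC : Claim D p R n)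
    {ι : Type} (W : Ultrafilter (ι → V)) (Ψ : List V → (ι → V) → Prop) (hΨ : Valid D p W Ψ) :
    ∀ᶠ B in (W : Filter (ι → V)), ∃ T, Om R Ψ n T B := by
  let F : Filter (ι ⊕ List Bool → V) :=
    { sets := {A | ∃ Ψ', Valid D p W Ψ' ∧ ∀ᶠ B in (W : Filter (ι → V)), ∀ T : List Bool → V,
        AntiOn R T (nodes n) → (∀ C ∈ combs n, Ψ' (C.map T) B) → Sum.elim B T ∈ A}
      univ_sets := ⟨Ψ, hΨ, by simp⟩
      sets_of_superset := by
        rintro A A' ⟨Ψ', h1, h2⟩ hA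
        exact ⟨Ψ', h1, h2.mono fun B hB T h3 h4 => hA (hB T h3 h4)⟩
      inter_sets := by
        rintro A A' ⟨Ψ1, h1, h2⟩ ⟨Ψ2, h3, h4⟩
        refine ⟨fun C B => Ψ1 C B ∧ Ψ2 C B, ⟨fun l => D.and (h1.1 l) (h3.1 l), fun l => ?_⟩, ?_⟩
        · filter_upwards [h1.2 l, h3.2 l] with C h5 h6
          exact h5.and h6
        · filter_upwards [h2, h4] with B h5 h6 T h7 h8
          exact ⟨h5 T h7 fun C hC => (h8 C hC).1, h6 T h7 fun C hC => (h8 C hC).2⟩ }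
  have memF : ∀ P : (ι ⊕ List Bool → V) → Prop, (∃ Ψ', Valid D p W Ψ' ∧
      ∀ᶠ B in (W : Filter (ι → V)), ∀ T : List Bool → V,
        AntiOn R T (nodes n) → (∀ C ∈ combs n, Ψ' (C.map T) B) → P (Sum.elim B T)) →
      ∀ᶠ w in F, P w := fun P h => h
  have hF : F.NeBot := by
    rw [Filter.neBot_iff]
    intro hbot
    have : (∅ : Set (ι ⊕ List Bool → V)) ∈ F := by rw [hbot]; trivial
    obtain ⟨Ψ', h1, h2⟩ := this
    obtain ⟨B, hB1, hB2⟩ := (h2.and (hC ι W Ψ' h1)).exists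
    obtain ⟨T, hT1, hT2⟩ := hB2
    exact hB1 T hT1 hT2
  set Wp : Ultrafilter (ι ⊕ List Bool → V) := Ultrafilter.of F with hWp
  have hle : (Wp : Filter _) ≤ F := Ultrafilter.of_le F
  set Ψp : List V → (ι ⊕ List Bool → V) → Prop := fun C' w =>
    Ψ C' (fun i => w (Sum.inl i)) ∧ ∀ C ∈ combs n,
      Ψ (C' ++ C.map fun c => w (Sum.inr c)) (fun i => w (Sum.inl i)) with hΨp
  obtain ⟨N, hN⟩ := exists_bound (combs n)
  have hv : Valid D p Wp Ψp := by
    constructor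
    · intro l
      refine D.and ?_ (D.list_all _ fun C hC => ?_)
      · have := hΨ.1.comp (I := Fin l ⊕ (ι ⊕ List Bool)) (List.ofFn fun i w => w (Sum.inl i))
          (by
            intro g hg
            rw [List.mem_ofFn] at hg
            obtain ⟨i, rfl⟩ := hg
            exact IsProj.coord _)
          (fun i w => w (Sum.inr (Sum.inl i))) (fun i => IsProj.coord _)
        simpa [List.map_ofFn, Function.comp_def] using this
      · have := hΨ.1.comp (I := Fin l ⊕ (ι ⊕ List Bool))
          ((List.ofFn fun i w => w (Sum.inl i)) ++ C.map fun c w => w (Sum.inr (Sum.inr c)))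
          (by
            intro g hg
            rw [List.mem_append, List.mem_ofFn, List.mem_map] at hg
            rcases hg with ⟨i, rfl⟩ | ⟨c, _, rfl⟩ <;>
            exact IsProj.coord _)
          (fun i w => w (Sum.inr (Sum.inl i))) (fun i => IsProj.coord _)
        simpa [List.map_ofFn, Function.comp_def] using this
    · intro l
      have h1 : ∀ᶠ C' in (gen (List.replicate l p) : Filter (List V)), ∀ l' ∈ List.range (N + 1),
          ∀ᶠ C in (gen (List.replicate l' p) : Filter (List V)),
            ∀ᶠ B in (W : Filter (ι → V)), Ψ (C' ++ C) B := by
        refine ev_list _ fun l' _ => ?_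
        have := hΨ.2 (l + l')
        rwa [List.replicate_add, gen_append] at this
      filter_upwards [h1, hΨ.2 l] with C' h2 h3
      apply Filter.Eventually.filter_mono hle
      apply Filter.Eventually.and
      · apply memF
        refine ⟨Ψ, hΨ, ?_⟩
        filter_upwards [h3] with B hB T _ _
        exact hB
      · apply memF
        refine ⟨fun C B => C.length ≤ N → Ψ (C' ++ C) B, ⟨?_, ?_⟩, ?_⟩
        · intro l'
          have h5 := hΨ.1.comp (I := Fin l' ⊕ ι)
            ((C'.map fun c _ => c) ++ (List.ofFn fun i w => w (Sum.inl i)))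
            (by
              intro g hg
              rw [List.mem_append, List.mem_ofFn, List.mem_map] at hg
              rcases hg with ⟨c, _, rfl⟩ | ⟨i, rfl⟩
              · exact IsProj.const _
              · exact IsProj.coord _)
            (fun i w => w (Sum.inr i)) (fun i => IsProj.coord _)
          have h6 := D.imp (D.const (l' ≤ N)) h5
          simpa [List.map_ofFn, Function.comp_def] using h6
        · intro l'
          by_cases hl' : l' ≤ N
          · filter_upwards [h2 l' (by simp; omega)] with C hC
            filter_upwards [hC] with B hB _
            exact hB
          · filter_upwards [gen_length (List.replicate l' p)] with C hC
            refine Filter.Eventually.of_forall fun B hB => ?_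
            simp at hC
            omega
        · refine Filter.Eventually.of_forall fun B T hT1 hT2 C hC => ?_
          exact hT2 C hC (by simpa using hN C hC)
  have hmain := hC _ Wp Ψp hv
  have hT0 : ∀ᶠ w in (Wp : Filter (ι ⊕ List Bool → V)), AntiOn R (fun c => w (Sum.inr c)) (nodes n) ∧
      ∀ C ∈ combs n, Ψ (C.map fun c => w (Sum.inr c)) (fun i => w (Sum.inl i)) := by
    apply Filter.Eventually.filter_mono hle
    apply memF
    exact ⟨Ψ, hΨ, Filter.Eventually.of_forall fun B T h1 h2 => ⟨h1, h2⟩⟩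
  have hgood : ∀ᶠ w in (Wp : Filter (ι ⊕ List Bool → V)), ∃ T, Om R Ψ n T (fun i => w (Sum.inl i)) := by
    filter_upwards [hmain, hT0] with w h1 h2
    obtain ⟨T1, hT1, hT1'⟩ := h1
    obtain ⟨hT0, hT0'⟩ := h2
    refine ⟨fun η => match η with
      | [] => w (Sum.inr [])
      | false :: η => w (Sum.inr η)
      | true :: η => T1 η, ?_, ?_⟩
    · intro η hη ν hν h3 h4
      simp only [nrnodes, List.mem_append, List.mem_map] at hη hν
      rcases hη with ⟨a, ha, rfl⟩ | ⟨a, ha, rfl⟩ <;> rcases hν with ⟨b, hb, rfl⟩ | ⟨b, hb, rfl⟩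
      · exact hT0 a ha b hb (by simpa using h3) (by simpa using h4)
      · simp at h3
      · simp at h3
      · exact hT1 a ha b hb (by simpa using h3) (by simpa using h4)
    · intro C hC
      simp only [nrcombs, List.mem_append, List.mem_map, List.mem_flatMap] at hC
      rcases hC with (⟨a, ha, rfl⟩ | ⟨a, ha, rfl⟩) | ⟨ν, hν, a, ha, rfl⟩
      · simpa [Function.comp_def] using hT0' a ha
      · simpa [Function.comp_def] using (hT1' a ha).1
      · simpa [Function.comp_def] using (hT1' [ν] (single_mem_combs hν)).2 a ha
  by_contra hcon
  rw [← Ultrafilter.eventually_not] at hcon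
  have : ∀ᶠ w in (Wp : Filter (ι ⊕ List Bool → V)), ¬ ∃ T, Om R Ψ n T (fun i => w (Sum.inl i)) := by
    apply Filter.Eventually.filter_mono hle
    apply memF
    exact ⟨Ψ, hΨ, hcon.mono fun B hB T h1 h2 => hB⟩
  obtain ⟨w, h1, h2⟩ := (hgood.and this).exists
  exact h2 h1

end Claim

section Step
variable {V : Type w} (D : DefSys V)

theorem Dfn_R {R : V → V → Prop} (hR : D.Dfn (fun w : Bool → V => R (w false) (w true)))
    {I : Type} {g h : (I → V) → V} (hg : IsProj g) (hh : IsProj h) :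
    D.Dfn (fun w => R (g w) (h w)) :=
  D.comp hR (g := fun b => if b then h else g) (by intro b; cases b <;> simp [hg, hh])

theorem Dfn_AntiOn {R : V → V → Prop} (hR : D.Dfn (fun w : Bool → V => R (w false) (w true)))
    (N : List (List Bool)) {I : Type} {T : List Bool → (I → V) → V} (hT : ∀ η, IsProj (T η)) :
    D.Dfn (fun w => AntiOn R (fun η => T η w) N) := by
  refine D.list_all _ fun η _ => D.list_all _ fun ν _ => D.imp (D.const _) (D.imp (D.const _)
    (D.not (Dfn_R D hR (hT η) (hT ν))))

theorem compact_h2 {p : Ultrafilter V} {R : V → V → Prop} {n : ℕ} (hC : Claim D p R n)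
    {ι : Type} (W : Ultrafilter (ι → V)) (Ψ : List V → (ι → V) → Prop) (hΨ : Valid D p W Ψ)
    (K : Type) [Finite K] (ε : V → Prop) (hε : D.Dfn1 ε) (hεp : ∀ᶠ x in (p : Filter V), ε x) :
    ∃ Y : (ι → V) → Prop, D.Dfn Y ∧ (∀ᶠ B in (W : Filter (ι → V)), Y B) ∧
      ∀ B : K → ι → V, (∀ k, Y (B k)) → ∃ T : List Bool → V, (∀ ν ∈ nrnodes n, ε (T ν)) ∧
        ∀ k, Om R Ψ n T (B k) := by
  by_contra hcon
  set noT : (K → ι → V) → Prop := fun B => ¬ ∃ T : List Bool → V, (∀ ν ∈ nrnodes n, ε (T ν)) ∧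
        ∀ k, Om R Ψ n T (B k) with hnoT
  have hcon' : ∀ Y : (ι → V) → Prop, D.Dfn Y → (∀ᶠ B in (W : Filter (ι → V)), Y B) →
      ∃ B : K → ι → V, (∀ k, Y (B k)) ∧ noT B := by
    intro Y h1 h2
    by_contra h3
    refine hcon ⟨Y, h1, h2, fun B hB => ?_⟩
    by_contra h4
    exact h3 ⟨B, hB, h4⟩
  let F : Filter (K × ι → V) :=
    { sets := {A | ∃ Y : (ι → V) → Prop, D.Dfn Y ∧ (∀ᶠ B in (W : Filter (ι → V)), Y B) ∧
        ∀ B : K × ι → V, (∀ k, Y (fun i => B (k, i))) → noT (fun k i => B (k, i)) → B ∈ A}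
      univ_sets := ⟨fun _ => True, D.tru, by simp, by simp⟩
      sets_of_superset := by
        rintro A A' ⟨Y, h1, h2, h3⟩ hA
        exact ⟨Y, h1, h2, fun B h4 h5 => hA (h3 B h4 h5)⟩
      inter_sets := by
        rintro A A' ⟨Y, h1, h2, h3⟩ ⟨Y', h1', h2', h3'⟩
        exact ⟨fun B => Y B ∧ Y' B, D.and h1 h1', h2.and h2', fun B h4 h5 =>
          ⟨h3 B (fun k => (h4 k).1) h5, h3' B (fun k => (h4 k).2) h5⟩⟩ }
  have hF : F.NeBot := by
    rw [Filter.neBot_iff]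
    intro hbot
    have : (∅ : Set (K × ι → V)) ∈ F := by rw [hbot]; trivial
    obtain ⟨Y, h1, h2, h3⟩ := this
    obtain ⟨B, hB1, hB2⟩ := hcon' Y h1 h2
    exact h3 (fun q => B q.1 q.2) hB1 hB2
  have memF : ∀ P : (K × ι → V) → Prop, (∃ Y : (ι → V) → Prop, D.Dfn Y ∧
      (∀ᶠ B in (W : Filter (ι → V)), Y B) ∧
        ∀ B : K × ι → V, (∀ k, Y (fun i => B (k, i))) → noT (fun k i => B (k, i)) → P B) →
      ∀ᶠ w in F, P w := fun P h => h
  have hle : (Ultrafilter.of F : Filter _) ≤ F := Ultrafilter.of_le F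
  have hval : Valid D p (Ultrafilter.of F) (fun C B => (∀ k, Ψ C (fun i => B (k, i))) ∧
      ∀ c ∈ C, ε c) := by
    constructor
    · intro l
      refine D.and (D.all_fin fun k => ?_) ?_
      · exact D.comp (hΨ.1 l) (g := Sum.elim (fun i w => w (Sum.inl i))
          (fun i w => w (Sum.inr (k, i)))) (by rintro (i | i) <;> exact IsProj.coord _)
      · simp only [List.mem_ofFn, forall_exists_index, forall_apply_eq_imp_iff]
        exact D.all_fin fun i => DefSys.Dfn1.comp D hε (IsProj.coord _)
    · intro l
      filter_upwards [hΨ.2 l, gen_all p l hεp, gen_length (List.replicate l p)] with C h1 h2 hl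
      apply Filter.Eventually.filter_mono hle
      apply memF
      refine ⟨fun B => Ψ C B, ?_, h1, fun B h3 _ => ⟨h3, h2⟩⟩
      have := hΨ.1.comp' (I := ι) C (fun c _ => c) (fun _ _ => IsProj.const _) (fun i w => w i)
        (fun i => IsProj.coord _)
      simpa using this
  have h1 := lemmaD D hC _ _ hval
  have h2 : ∀ᶠ w in ((Ultrafilter.of F : Ultrafilter (K × ι → V)) : Filter (K × ι → V)),
      noT (fun k i => w (k, i)) := by
    apply Filter.Eventually.filter_mono hle
    apply memF
    exact ⟨fun _ => True, D.tru, by simp, fun B _ h => h⟩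
  obtain ⟨w, ⟨T, hT1, hT2⟩, h3⟩ := (h1.and h2).exists
  refine h3 ⟨T, ?_, fun k => ⟨hT1, fun C hC => (hT2 C hC).1 k⟩⟩
  intro ν hν
  exact (hT2 [ν] (single_mem_nrcombs hν)).2 _ (by simp)

/-- the root vertex is anti to the nonroot vertices -/
def Al (R : V → V → Prop) (n : ℕ) (y : V) (T : List Bool → V) : Prop :=
  ∀ ν ∈ nrnodes n, ¬ R y (T ν)

theorem step_tree {R : V → V → Prop} {n : ℕ} {ι : Type} {Ψ : List V → (ι → V) → Prop} {y : V}
    {T : List Bool → V} {B : ι → V} (h1 : Al R n y T) (h2 : Ψ [y] B) (h3 : Om R Ψ n T B) :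
    ∃ T : List Bool → V, AntiOn R T (nodes (n + 1)) ∧ ∀ C ∈ combs (n + 1), Ψ (C.map T) B := by
  refine ⟨fun η => if η = [] then y else T η, ?_, ?_⟩
  · intro η hη ν hν h4 h5
    rw [nodes_succ, List.mem_cons] at hη hν
    rcases hν with rfl | hν
    · simp at h4; exact absurd h4 h5
    rcases hη with rfl | hη
    · simpa [nrnodes_ne hν] using h1 ν hν
    · simpa [nrnodes_ne hν, nrnodes_ne hη] using h3.1 η hη ν hν h4 h5
  · intro C hC
    rw [combs_succ, List.mem_cons] at hC
    rcases hC with rfl | hC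
    · simpa using h2
    · have : C.map (fun η => if η = [] then y else T η) = C.map T := by
        apply List.map_congr_left
        intro c hc
        simp [nrcombs_ne hC c hc]
      rw [this]
      exact h3.2 C hC

theorem step [Nonempty V] (hN : D.NSOP) (p q : Ultrafilter V) (hpq : D.Agree p q)
    (hqp : D.Agree q p) {R : V → V → Prop}
    (hR : D.Dfn (fun w : Bool → V => R (w false) (w true)))
    (hq : ∀ᶠ x in (q : Filter V), ∀ᶠ y in (q : Filter V), ¬ R x y) (n : ℕ)
    (hC : Claim D p R n) : Claim D p R (n + 1) := by
  intro ι W Ψ hΨ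
  by_contra hcon
  set Y : (ι → V) → Prop := fun B => ¬ ∃ T : List Bool → V, AntiOn R T (nodes (n + 1)) ∧
      ∀ C ∈ combs (n + 1), Ψ (C.map T) B with hY
  have hYW : ∀ᶠ B in (W : Filter (ι → V)), Y B := by
    rw [← Ultrafilter.eventually_not] at hcon
    exact hcon
  have hYD : D.Dfn Y := by
    refine D.not (D.ex (P := fun T B => AntiOn R T (nodes (n + 1)) ∧
      ∀ C ∈ combs (n + 1), Ψ (C.map T) B) (D.and ?_ (D.list_all _ fun C _ => ?_)))
    · exact Dfn_AntiOn D hR _ (fun η => IsProj.coord _)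
    · exact hΨ.1.comp' C (fun η w => w (Sum.inr η)) (fun _ _ => IsProj.coord _)
        (fun i w => w (Sum.inl i)) (fun i => IsProj.coord _)
  have hΨ1 : ∀ {I : Type} (g : (I → V) → V) (k : ι → (I → V) → V), IsProj g →
      (∀ i, IsProj (k i)) → D.Dfn (fun w => Ψ [g w] (fun i => k i w)) := by
    intro I g k hg hk
    exact hΨ.1.comp [g] (by simpa using hg) k hk
  have hq' : ∀ᶠ x in (q : Filter V), ∀ᶠ y in (p : Filter V), ¬ R x y := by
    filter_upwards [hq] with x hx
    exact hqp _ (D.not (Dfn_R D hR (IsProj.const _) (IsProj.coord _))) hx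
  have hεD : ∀ X : List V, D.Dfn1 (fun y => ∀ x ∈ X, ¬ R x y) := by
    intro X
    exact D.list_all _ fun x _ => D.not (Dfn_R D hR (IsProj.const _) (IsProj.coord _))
  have P : ∀ (m : ℕ) (Y' : (ι → V) → Prop), D.Dfn Y' → (∀ᶠ B in (W : Filter (ι → V)), Y' B) →
      ∀ᶠ X in (gen (List.replicate (2 ^ m) q) : Filter (List V)),
        ∃ (T : List Bool → List Bool → V) (B : List Bool → ι → V),
          (∀ η : List Bool, η.length ≤ m → Y' (B η)) ∧
          (∀ x ∈ X, Ψ [x] (B [])) ∧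
          (∀ σ : List Bool, σ.length = m → ∃ x ∈ X, ∀ η, η <+: σ → η ≠ [] →
            Al R n x (T η) ∧ Ψ [x] (B η)) ∧
          (∀ e1 e2 : List Bool, (e1 ++ [false]) <+: e2 → e2.length ≤ m →
            Om R Ψ n (T (e1 ++ [true])) (B e2)) := by
    have hKL : ∀ (Y' : (ι → V) → Prop), D.Dfn Y' → (∀ᶠ B in (W : Filter (ι → V)), Y' B) →
        ∀ m, ∀ᶠ X in (gen (List.replicate m q) : Filter (List V)),
          ∃ B, ∀ x ∈ X, Ψ [x] B ∧ Y' B := by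
      intro Y' hY' hY'W
      refine KL D hN p q hpq (φ := fun x B => Ψ [x] B ∧ Y' B) (D.and ?_ ?_) ?_
      · exact hΨ1 _ _ (IsProj.coord _) (fun i => IsProj.coord _)
      · exact D.comp hY' (g := fun i w => w (Sum.inr i)) (fun i => IsProj.coord _)
      · intro m
        have h1 := hΨ.2 1
        simp only [List.replicate_one, gen_cons, gen_nil] at h1
        filter_upwards [gen_all p m h1] with X hX
        obtain ⟨B, hB1, hB2⟩ := ((ev_list X hX).and hY'W).exists
        exact ⟨B, fun x hx => ⟨hB1 x hx, hB2⟩⟩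
    intro m
    induction m with
    | zero =>
      intro Y' hY' hY'W
      filter_upwards [hKL Y' hY' hY'W (2 ^ 0), gen_length (List.replicate (2 ^ 0) q)] with X hX hl
      obtain ⟨B, hB⟩ := hX
      simp at hl
      obtain ⟨x, rfl⟩ := List.length_eq_one_iff.1 hl
      simp at hB
      obtain ⟨v0⟩ := ‹Nonempty V›
      refine ⟨fun _ _ => v0, fun _ => B, fun _ _ => hB.2, by simpa using hB.1, ?_, ?_⟩
      · intro σ hσ
        rw [List.length_eq_zero_iff] at hσ
        subst hσ
        refine ⟨x, by simp, fun η h1 h2 => ?_⟩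
        simp at h1
        exact absurd h1 h2
      · intro e1 e2 h1 h2
        have := h1.length_le
        simp at this
        omega
    | succ m ih =>
      intro Y' hY' hY'W
      have hroot := hKL Y' hY' hY'W (2 ^ (m + 1))
      rw [pow_succ, mul_two, List.replicate_add, gen_append] at hroot ⊢
      filter_upwards [hroot, ih Y' hY' hY'W, gen_all q (2 ^ m) hq', gen_length _]
        with X1 hr1 h1 he1 hl1
      haveI : Finite {η : List Bool // η.length ≤ m} :=
        (List.finite_length_le Bool m).to_subtype
      obtain ⟨Y2, hY2, hY2W, hY2e⟩ := compact_h2 D hC W Ψ hΨ {η : List Bool // η.length ≤ m}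
        (fun y => ∀ x ∈ X1, ¬ R x y) (hεD X1) (ev_list X1 he1)
      filter_upwards [hr1, ih (fun B => Y' B ∧ Y2 B) (D.and hY' hY2) (hY'W.and hY2W),
        gen_all q (2 ^ m) hq'] with X0 hr0 h0 he0
      obtain ⟨T1, B1, a1, b1, c1, d1⟩ := h1
      obtain ⟨T0, B0, a0, b0, c0, d0⟩ := h0
      obtain ⟨Br, hBr⟩ := hr0
      obtain ⟨v, hv⟩ := (ev_list X0 he0).exists
      obtain ⟨Tt, hTt1, hTt2⟩ := hY2e (fun k => B0 k.1) (fun k => (a0 k.1 k.2).2)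
      have hX1 : X1 ≠ [] := by
        intro h
        rw [h] at hl1
        simp at hl1
        exact absurd hl1.symm (by positivity)
      refine ⟨fun e => match e with
        | [] => Tt
        | [false] => fun _ => v
        | [true] => Tt
        | false :: b :: r => T0 (b :: r)
        | true :: b :: r => T1 (b :: r), fun e => match e with
        | [] => Br
        | false :: r => B0 r
        | true :: r => B1 r, ?_, ?_, ?_, ?_⟩
      · rintro (_ | ⟨_ | _, η⟩) hη
        · obtain ⟨x, hx⟩ := List.exists_mem_of_ne_nil _ hX1
          exact (hBr x (by simp [hx])).2
        · exact (a0 η (by simpa using hη)).1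
        · exact a1 η (by simpa using hη)
      · intro x hx
        exact (hBr x hx).1
      · rintro (_ | ⟨_ | _, σ⟩) hσ
        · simp at hσ
        · obtain ⟨x, hx, hx2⟩ := c0 σ (by simpa using hσ)
          refine ⟨x, by simp [hx], ?_⟩
          rintro (_ | ⟨z, _ | ⟨b, r⟩⟩) h1 h2
          · exact absurd rfl h2
          · simp at h1; subst h1
            exact ⟨fun ν _ => hv x hx, b0 x hx⟩
          · rw [List.cons_prefix_cons] at h1
            obtain ⟨rfl, h1⟩ := h1
            exact hx2 _ h1 (by simp)
        · obtain ⟨x, hx, hx2⟩ := c1 σ (by simpa using hσ)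
          refine ⟨x, by simp [hx], ?_⟩
          rintro (_ | ⟨z, _ | ⟨b, r⟩⟩) h1 h2
          · exact absurd rfl h2
          · simp at h1; subst h1
            exact ⟨fun ν hν => hTt1 ν hν x hx, b1 x hx⟩
          · rw [List.cons_prefix_cons] at h1
            obtain ⟨rfl, h1⟩ := h1
            exact hx2 _ h1 (by simp)
      · rintro (_ | ⟨z, e1⟩) (_ | ⟨y, e2⟩) h2 h3
        · simp at h2
        · simp at h2; subst h2; exact hTt2 ⟨e2, by simpa using h3⟩
        · simp at h2
        · rw [List.cons_append, List.cons_prefix_cons] at h2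
          obtain ⟨rfl, h2⟩ := h2
          obtain ⟨b', r', he⟩ : ∃ b' r', e1 ++ [true] = b' :: r' :=
            List.exists_cons_of_ne_nil (by simp)
          cases z
          · have := d0 e1 e2 h2 (by simpa using h3)
            simp only [List.cons_append, he] at this ⊢
            exact this
          · have := d1 e1 e2 h2 (by simpa using h3)
            simp only [List.cons_append, he] at this ⊢
            exact this
  obtain ⟨d, hd⟩ := hN (U := Unit) (E := List Bool ⊕ ι) (fun k e =>
    Al R n (k ()) (fun η => e (Sum.inl η)) ∧ Ψ [k ()] (fun i => e (Sum.inr i)) ∧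
      Y (fun i => e (Sum.inr i))) (by
    refine D.and ?_ (D.and ?_ ?_)
    · exact D.list_all _ fun ν _ => D.not (Dfn_R D hR (IsProj.coord _) (IsProj.coord _))
    · exact hΨ1 _ _ (IsProj.coord _) (fun i => IsProj.coord _)
    · exact D.comp hYD (g := fun i w => w (Sum.inr (Sum.inr i))) (fun i => IsProj.coord _))
  obtain ⟨X, T, B, ha, hb, hc, hd'⟩ := (P d Y hYD hYW).exists
  refine hd ⟨fun η => Sum.elim (T η) (B η), ?_, ?_⟩
  · intro σ hσ
    obtain ⟨x, hx, hx2⟩ := hc σ hσ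
    refine ⟨fun _ => x, fun η h1 h2 => ⟨(hx2 η h1 h2).1, (hx2 η h1 h2).2, ha η ?_⟩⟩
    rw [← hσ]
    exact h1.length_le
  · rintro e1 e2 h1 h2 ⟨k, hk1, hk2⟩
    exact hk1.2.2 (step_tree hk2.1 hk1.2.1 (hd' e1 e2 h1 h2))

/-- the abstract core -/
theorem core [Nonempty V] (hN : D.NSOP) (p q : Ultrafilter V) (hpq : D.Agree p q)
    (hqp : D.Agree q p) (Cl : List V → Prop)
    (hCl : ∀ l, D.Dfn (fun w : Fin l → V => Cl (List.ofFn w)))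
    (hq : ∀ᶠ x in (q : Filter V), ∀ᶠ y in (q : Filter V), ¬ Cl [x, y])
    (hp : ∀ l, ∀ᶠ C in (gen (List.replicate l p) : Filter (List V)), Cl C) (n : ℕ) :
    ∃ T : List Bool → V, AntiOn (fun x y => Cl [x, y]) T (nodes n) ∧
      ∀ C ∈ combs n, Cl (C.map T) := by
  have hR : D.Dfn (fun w : Bool → V => Cl [w false, w true]) := by
    have := D.comp (hCl 2) (g := fun i w => w (if i = 0 then false else true))
      (fun i => IsProj.coord _)
    simpa using this
  have claim : ∀ n, Claim D p (fun x y => Cl [x, y]) n := by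
    intro n
    induction n with
    | zero =>
      intro ι W Ψ hΨ
      have := hΨ.2 0
      simp only [List.replicate_zero, gen_nil] at this
      obtain ⟨v0⟩ := ‹Nonempty V›
      filter_upwards [this] with B hB
      refine ⟨fun _ => v0, ?_, ?_⟩
      · intro η hη
        simp [nodes] at hη
      · simpa [combs] using hB
    | succ n ih => exact step D hN p q hpq hqp hR hq n ih
  obtain ⟨v0⟩ := ‹Nonempty V›
  have := claim n Unit (pure fun _ => v0) (fun C _ => Cl C) ⟨?_, ?_⟩
  · obtain ⟨_, T, hT⟩ := this.exists
    exact ⟨T, hT⟩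
  · intro l
    exact D.comp (hCl l) (g := fun i w => w (Sum.inl i)) (fun i => IsProj.coord _)
  · intro l
    filter_upwards [hp l] with C hC
    exact Filter.Eventually.of_forall fun _ => hC

end Step

theorem realize_congr_fv {L : FirstOrder.Language.{x, y}} {M : Type z} [L.Structure M]
    {α : Type*} [DecidableEq α] (φ : L.Formula α) (v v' : α → M)
    (h : ∀ a ∈ φ.freeVarFinset, v a = v' a) : φ.Realize v ↔ φ.Realize v' := by
  have h1 : (BoundedFormula.restrictFreeVar φ (fun a => a.1)).Realize v default ↔
      BoundedFormula.Realize φ v default :=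
    BoundedFormula.realize_restrictFreeVar v (fun a => rfl)
  have h2 : (BoundedFormula.restrictFreeVar φ (fun a => a.1)).Realize v default ↔
      BoundedFormula.Realize φ v' default :=
    BoundedFormula.realize_restrictFreeVar v' (fun a => h a.1 a.2)
  exact h1.symm.trans h2

open Classical in
theorem ex_formula {L : FirstOrder.Language.{x, y}} {M : Type z} [L.Structure M] [Nonempty M]
    {α β : Type*} (φ : L.Formula (α ⊕ β)) :
    ∃ ψ : L.Formula α, ∀ v : α → M, ψ.Realize v ↔ ∃ e : β → M, φ.Realize (Sum.elim v e) := by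
  let f : φ.freeVarFinset → α ⊕ φ.freeVarFinset := fun a =>
    match h : a.1 with
    | Sum.inl c => Sum.inl c
    | Sum.inr _ => Sum.inr a
  let φ' : L.Formula (α ⊕ φ.freeVarFinset) := BoundedFormula.restrictFreeVar φ f
  refine ⟨φ'.iExs φ.freeVarFinset, fun v => ?_⟩
  rw [Formula.realize_iExs]
  constructor
  · rintro ⟨e, he⟩
    refine ⟨fun b => if h : Sum.inr b ∈ φ.freeVarFinset then e ⟨_, h⟩ else Classical.arbitrary M, ?_⟩
    refine (BoundedFormula.realize_restrictFreeVar _ ?_).1 he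
    rintro ⟨a | b, ha⟩
    · simp [f]
    · simp [f, ha]
  · rintro ⟨e, he⟩
    refine ⟨fun a => Sum.elim v e a.1, ?_⟩
    refine (BoundedFormula.realize_restrictFreeVar (Sum.elim v e) ?_).2 he
    rintro ⟨a | b, ha⟩
    · simp [f]
    · simp [f]

/-- definability in a structure, for `m`-tuples -/
def strSys (L : FirstOrder.Language.{x, y}) (M : Type z) [L.Structure M] [Nonempty M] (m : ℕ) :
    DefSys (Fin m → M) where
  Dfn {I} P := ∃ φ : L.Formula ((I × Fin m) ⊕ M),
    ∀ w, P w ↔ φ.Realize (Sum.elim (fun q => w q.1 q.2) id)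
  tru := ⟨⊤, fun w => by simp⟩
  and := by
    rintro I P Q ⟨φ, hφ⟩ ⟨ψ, hψ⟩
    exact ⟨φ ⊓ ψ, fun w => by show P w ∧ Q w ↔ _; rw [Formula.realize_inf, hφ, hψ]⟩
  not := by
    rintro I P ⟨φ, hφ⟩
    exact ⟨∼φ, fun w => by show ¬ P w ↔ _; rw [Formula.realize_not, hφ]⟩
  ex := by
    rintro I U P ⟨φ, hφ⟩
    let g : (((I ⊕ U) × Fin m) ⊕ M) → ((I × Fin m) ⊕ M) ⊕ (U × Fin m)
      | Sum.inl (Sum.inl i, s) => Sum.inl (Sum.inl (i, s))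
      | Sum.inl (Sum.inr i, s) => Sum.inr (i, s)
      | Sum.inr c => Sum.inl (Sum.inr c)
    obtain ⟨ψ, hψ⟩ := ex_formula (M := M) (φ.relabel g)
    refine ⟨ψ, fun w => ?_⟩
    rw [hψ]
    constructor
    · rintro ⟨k, hk⟩
      refine ⟨fun q => k q.1 q.2, ?_⟩
      rw [Formula.realize_relabel]
      refine (iff_of_eq (congrArg _ ?_)).1 ((hφ (Sum.elim w k)).1 hk)
      funext a
      rcases a with ⟨i | i, s⟩ | c <;> rfl
    · rintro ⟨e, he⟩
      rw [Formula.realize_relabel] at he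
      refine ⟨fun u s => e (u, s), (hφ (Sum.elim w (fun u s => e (u, s)))).2 ?_⟩
      refine (iff_of_eq (congrArg _ ?_)).1 he
      funext a
      rcases a with ⟨i | i, s⟩ | c <;> rfl
  sub := by
    rintro I J P f ⟨φ, hφ⟩
    let g : ((J × Fin m) ⊕ M) → ((I × Fin m) ⊕ M)
      | Sum.inl (j, s) => Sum.elim (fun i => Sum.inl (i, s)) (fun c => Sum.inr (c s)) (f j)
      | Sum.inr c => Sum.inr c
    refine ⟨φ.relabel g, fun w => ?_⟩
    show P _ ↔ _
    rw [Formula.realize_relabel, hφ]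
    refine iff_of_eq (congrArg _ ?_)
    funext a
    rcases a with ⟨j, s⟩ | c
    · rcases h : f j with i | c <;> simp [g, h]
    · rfl

open Classical in
theorem theta_red {L : FirstOrder.Language.{x, y}} {M : Type z} [L.Structure M] [Nonempty M]
    {m : ℕ} {U E : Type} (θ : (U → Fin m → M) → (E → Fin m → M) → Prop)
    (h : (strSys L M m).Dfn (fun w : U ⊕ E → Fin m → M =>
      θ (fun i => w (Sum.inl i)) (fun i => w (Sum.inr i)))) :
    ∃ (k : ℕ) (ψ : L.Formula (Fin k ⊕ Fin k)) (A : (U → Fin m → M) → Fin k → M)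
      (B : (E → Fin m → M) → Fin k → M) (R : (Fin k → M) → (U → Fin m → M)),
      (∀ a t, θ a t ↔ ψ.Realize (Sum.elim (A a) (B t))) ∧
      (∀ xx t, ψ.Realize (Sum.elim xx (B t)) ↔ θ (R xx) t) := by
  obtain ⟨φ, hφ⟩ := h
  let e := φ.freeVarFinset.equivFin
  let f : φ.freeVarFinset → Fin φ.freeVarFinset.card ⊕ Fin φ.freeVarFinset.card := fun a =>
    match a.1 with
    | Sum.inl (Sum.inl _, _) => Sum.inl (e a)
    | _ => Sum.inr (e a)
  let A : (U → Fin m → M) → Fin φ.freeVarFinset.card → M := fun k j =>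
    match (e.symm j).1 with
    | Sum.inl (Sum.inl a, s) => k a s
    | _ => Classical.arbitrary M
  let B : (E → Fin m → M) → Fin φ.freeVarFinset.card → M := fun t j =>
    match (e.symm j).1 with
    | Sum.inl (Sum.inl _, _) => Classical.arbitrary M
    | Sum.inl (Sum.inr a, s) => t a s
    | Sum.inr c => c
  let R : (Fin φ.freeVarFinset.card → M) → (U → Fin m → M) := fun xx a s =>
    if h : Sum.inl (Sum.inl a, s) ∈ φ.freeVarFinset then xx (e ⟨_, h⟩) else Classical.arbitrary M
  refine ⟨_, BoundedFormula.restrictFreeVar φ f, A, B, R, fun a t => ?_, fun xx t => ?_⟩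
  · refine (hφ (Sum.elim a t)).trans ?_
    refine (BoundedFormula.realize_restrictFreeVar _ ?_).symm
    rintro ⟨⟨i | i, s⟩ | c, ha⟩ <;> simp [f, A, B]
  · refine Iff.trans ?_ (hφ (Sum.elim (R xx) t)).symm
    refine (BoundedFormula.realize_restrictFreeVar _ ?_)
    rintro ⟨⟨i | i, s⟩ | c, ha⟩ <;> simp [f, R, B, ha]

theorem ofFn_isPre (σ : ℕ → Bool) {i j : ℕ} (h : i ≤ j) :
    (List.ofFn fun k : Fin i => σ k) <+: (List.ofFn fun k : Fin j => σ k) := by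
  rw [List.prefix_iff_eq_take]
  apply List.ext_getElem <;> simp [h]

theorem product_theory {L : FirstOrder.Language.{x, y}} {M : Type z} [L.Structure M] [Nonempty M]
    {ι : Type w} (F : Ultrafilter ι) :
    L.completeTheory ((F : Filter ι).Product (fun _ => M)) = L.completeTheory M := by
  ext S
  show _ ⊨ S ↔ _ ⊨ S
  rw [Ultraproduct.sentence_realize]
  simp

/-- the class of a function in the ultrapower -/
def gm {M : Type z} {ι : Type w} (F : Ultrafilter ι) (f : ι → M) :
    (F : Filter ι).Product (fun _ => M) := f

theorem gm_surj {M : Type z} {ι : Type w} {F : Ultrafilter ι}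
    (a : (F : Filter ι).Product (fun _ => M)) : ∃ f : ι → M, gm F f = a :=
  Quotient.exists_rep a

theorem realize_gm {L : FirstOrder.Language.{x, y}} {M : Type z} [L.Structure M] [Nonempty M]
    {ι : Type w} (F : Ultrafilter ι) {β : Type*} (φ : L.Formula β) (v : β → ι → M) :
    φ.Realize (fun i => gm F (v i)) ↔ ∀ᶠ a in (F : Filter ι), φ.Realize fun i => v i a :=
  Ultraproduct.realize_formula_cast (u := F) (M := fun _ => M) φ v

theorem strSys_NSOP {L : FirstOrder.Language.{x, y}} {N : Type z} [L.Structure N]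
    (hN : IsNSOP1Th L N) (M : Type (max x y z)) [L.Structure M] [Nonempty M]
    (hM : L.completeTheory N = L.completeTheory M) (m : ℕ) : (strSys L M m).NSOP := by
  intro U E θ hθ
  by_contra hcon
  push Not at hcon
  choose t ht using hcon
  obtain ⟨k, ψ, A, B, R, h1, h2⟩ := theta_red θ hθ
  let F : Ultrafilter ℕ := Filter.hyperfilter ℕ
  have hF : ∀ n : ℕ, ∀ᶠ d in (F : Filter ℕ), n ≤ d := fun n =>
    Nat.hyperfilter_le_atTop (Filter.eventually_ge_atTop n)
  apply hN
  refine ⟨(F : Filter ℕ).Product (fun _ => M), inferInstance, ?_, k, k, ψ,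
    fun η j => gm F (fun d => B (t (d+1) (false :: η)) j), ?_, ?_⟩
  · rw [hM, product_theory]
  · intro σ s
    have : ∀ d, ∃ a, ∀ η, η <+: false :: (List.ofFn fun i : Fin d => σ i) → η ≠ [] →
        θ a (t (d+1) η) := fun d => (ht (d+1)).1 _ (by simp)
    choose a ha using this
    refine ⟨fun j => gm F (fun d => A (a d) j), fun i _ => ?_⟩
    have := (realize_gm F ψ
      (fun j d => Sum.elim (A (a d)) (B (t (d+1) (false :: (List.ofFn fun l : Fin i => σ l)))) j)).2 ?_
    · refine (iff_of_eq (congrArg ψ.Realize ?_)).1 this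
      funext j; rcases j with j | j <;> rfl
    · filter_upwards [hF i] with d hd
      have := (h1 _ _).1 (ha d (false :: (List.ofFn fun l : Fin i => σ l))
        (by simpa using ofFn_isPre σ hd) (by simp))
      exact this
  · rintro e1 e2 he ⟨xx, hx1, hx2⟩
    choose X hX using fun j => gm_surj (xx j)
    have key : ∀ η, ψ.Realize (Sum.elim xx (fun j => gm F (fun d => B (t (d+1) (false :: η)) j))) →
        ∀ᶠ d in (F : Filter ℕ), ψ.Realize (Sum.elim (fun j => X j d) (B (t (d+1) (false :: η)))) := by
      intro η h
      have := (realize_gm F ψ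
        (fun j d => Sum.elim (fun j => X j d) (B (t (d+1) (false :: η))) j)).1 ?_
      · exact this
      · refine (iff_of_eq (congrArg _ ?_)).1 h
        funext j; rcases j with j | j
        · exact (hX j).symm
        · rfl
    obtain ⟨d, hd1, hd2, hd3⟩ := ((key _ hx1).and ((key _ hx2).and (hF e2.length))).exists
    refine (ht (d+1)).2 (false :: e1) (false :: e2) (by simpa using he) (by simpa using hd3)
      ⟨R fun j => X j d, (h2 _ _).1 hd1, (h2 _ _).1 hd2⟩

/-- hypergraph relation given by a sequence of formulas -/
def ClS {L : FirstOrder.Language.{x, y}} {m : ℕ} (cl : ∀ l : ℕ, L.Formula (Fin l × Fin m))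
    {S : Type z} [L.Structure S] (l : List (Fin m → S)) : Prop :=
  ∃ (k : ℕ) (w : Fin k → Fin m → S), l = List.ofFn w ∧ (cl k).Realize (fun q => w q.1 q.2)

theorem ClS_ofFn {L : FirstOrder.Language.{x, y}} {m : ℕ}
    (cl : ∀ l : ℕ, L.Formula (Fin l × Fin m))
    {S : Type z} [L.Structure S] {k : ℕ} (w : Fin k → Fin m → S) :
    ClS cl (List.ofFn w) ↔ (cl k).Realize (fun q => w q.1 q.2) := by
  constructor
  · rintro ⟨k', w', h, hr⟩
    have := List.ofFn_inj'.1 h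
    cases this
    exact hr
  · intro h
    exact ⟨k, w, rfl, h⟩

theorem ClS_gm {L : FirstOrder.Language.{x, y}} {m : ℕ}
    (cl : ∀ l : ℕ, L.Formula (Fin l × Fin m))
    {S : Type z} [L.Structure S] [Nonempty S] {ι : Type w} (F : Ultrafilter ι)
    {β : Type*} (fs : List β) (g : β → Fin m → ι → S) :
    ClS cl (fs.map fun b i => gm F (g b i)) ↔
      ∀ᶠ a in (F : Filter ι), ClS cl (fs.map fun b i => g b i a) := by
  obtain ⟨k, w, rfl⟩ : ∃ (k : ℕ) (w : Fin k → β), fs = List.ofFn w :=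
    ⟨_, _, (List.ofFn_get fs).symm⟩
  simp only [List.map_ofFn, ClS_ofFn]
  exact realize_gm F (cl k) (fun q => g (w q.1) q.2)

theorem ClS_sub {L : FirstOrder.Language.{x, y}} {m : ℕ}
    (cl : ∀ l : ℕ, L.Formula (Fin l × Fin m))
    {S : Type z} [L.Structure S] (M : L.ElementarySubstructure S) (fs : List (Fin m → M)) :
    ClS cl (fs.map fun b i => (b i : S)) ↔ ClS cl fs := by
  obtain ⟨k, w, rfl⟩ : ∃ (k : ℕ) (w : Fin k → Fin m → M), fs = List.ofFn w :=
    ⟨_, _, (List.ofFn_get fs).symm⟩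
  simp only [List.map_ofFn, ClS_ofFn]
  exact M.subtype.map_formula (cl k) (fun q => w q.1 q.2)

section code
variable {K : Type w} [LinearOrder K]

/-- code of a sequence in the binary tree -/
def tcode (F : Finset K) (s : List K) : List Bool :=
  s.flatMap fun a => List.replicate (F.filter (· < a)).card false ++ [true]

theorem tcode_append (F : Finset K) (s s' : List K) :
    tcode F (s ++ s') = tcode F s ++ tcode F s' := by simp [tcode]

theorem tcode_anti (F : Finset K) (s s' : List K) (a a' : K) (h : a < a') (ha : a ∈ F) :
    ∃ e, tcode F (s ++ [a]) = e ++ [true] ∧ (e ++ [false]) <+: tcode F (s ++ a' :: s') := by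
  refine ⟨tcode F s ++ List.replicate (F.filter (· < a)).card false, ?_, ?_⟩
  · simp [tcode]
  · have hc : (F.filter (· < a)).card + 1 ≤ (F.filter (· < a')).card := by
      apply Finset.card_lt_card
      rw [Finset.ssubset_iff_of_subset]
      · exact ⟨a, by simp [ha, h], by simp⟩
      · intro c hc
        simp only [Finset.mem_filter] at hc ⊢
        exact ⟨hc.1, hc.2.trans h⟩
    obtain ⟨r, hr⟩ := Nat.exists_eq_add_of_le hc
    rw [tcode_append, List.append_assoc, List.prefix_append_right_inj]
    have : tcode F (a' :: s') = List.replicate (F.filter (· < a)).card false ++ [false] ++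
        (List.replicate r false ++ [true] ++ tcode F s') := by
      simp only [tcode, List.flatMap_cons, hr, List.replicate_add]
      simp
    rw [this]
    exact List.prefix_append _ _

end code

theorem seq_abstract {K : Type u} [LinearOrder K] {X : Type v} [Nonempty X] {Φ : Type w}
    (hK : ∀ f : K → Set Φ, ¬ Function.Injective f) (c : List K → X)
    (tp : (ℕ → Bool → X) → X → Set Φ) :
    ∃ (a a' : ℕ → K) (η : ℕ → List K) (C : ℕ → Bool → X),
      (∀ i, a i < a' i) ∧ (∀ i, η (i+1) = η i ++ [a' i]) ∧ (∀ i, C i true = c (η i ++ [a i])) ∧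
      (∀ i, C i false = c (η (i+1))) ∧
      ∀ i, ∃ past, (∀ j < i, past j = C j) ∧ tp past (C i true) = tp past (C i false) := by
  have pig : ∀ (past : ℕ → Bool → X) (η : List K), ∃ a a' : K, a < a' ∧
      tp past (c (η ++ [a])) = tp past (c (η ++ [a'])) := by
    intro past η
    have := hK (fun a => tp past (c (η ++ [a])))
    simp only [Function.Injective] at this
    push Not at this
    obtain ⟨a, a', h1, h2⟩ := this
    rcases lt_or_gt_of_ne h2 with h | h
    · exact ⟨a, a', h, h1⟩
    · exact ⟨a', a, h, h1.symm⟩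
  choose fa fa' hlt htp using pig
  let new : List K × (ℕ → Bool → X) → Bool → X := fun s ε =>
    if ε then c (s.1 ++ [fa s.2 s.1]) else c (s.1 ++ [fa' s.2 s.1])
  let st : ℕ → List K × (ℕ → Bool → X) := fun n => Nat.rec
    ([], fun _ _ => Classical.arbitrary X)
    (fun i s => (s.1 ++ [fa' s.2 s.1], Function.update s.2 i (new s))) n
  have st1 : ∀ i, st (i+1) = ((st i).1 ++ [fa' (st i).2 (st i).1],
    Function.update (st i).2 i (new (st i))) := fun i => rfl
  have hpast : ∀ i, ∀ j < i, (st i).2 j = new (st j) := by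
    intro i
    induction i with
    | zero => intro j hj; omega
    | succ i ih =>
      intro j hj
      rw [st1]
      rcases Nat.lt_succ_iff_lt_or_eq.1 hj with h | h
      · rw [← ih j h]
        simp [Function.update, h.ne]
      · subst h; simp
  exact ⟨fun i => fa (st i).2 (st i).1, fun i => fa' (st i).2 (st i).1, fun i => (st i).1,
    fun i => new (st i), fun i => hlt _ _, fun i => rfl, fun i => rfl, fun i => rfl,
    fun i => ⟨(st i).2, hpast i, htp _ _⟩⟩

/-- The core applied inside a Skolem hull. -/
theorem hull_tree {L : FirstOrder.Language.{x, y}} {N : Type z} [L.Structure N]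
    (hN : IsNSOP1Th L N) (V : Type (max x y z)) [L.Structure V] [Nonempty V]
    (hV : L.completeTheory N = L.completeTheory V) {m : ℕ}
    (cl : ∀ l : ℕ, L.Formula (Fin l × Fin m)) (C : ℕ → Bool → Fin m → V)
    (hsame : ∀ i, ∃ past : ℕ → Bool → Fin m → V, (∀ j < i, past j = C j) ∧
      ∀ φ : (L.sum L.skolem₁).Formula (Fin m ⊕ (ℕ × Bool × Fin m)),
        φ.Realize (Sum.elim (C i true) (fun q => past q.1 q.2.1 q.2.2)) ↔
        φ.Realize (Sum.elim (C i false) (fun q => past q.1 q.2.1 q.2.2)))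
    (hanti : ∀ i j, i < j → ¬ ClS cl [C i true, C j true])
    (hclq : ∀ is : List ℕ, ClS cl (is.map fun i => C i false)) (n : ℕ) :
    ∃ T : List Bool → Fin m → V, AntiOn (fun x y => ClS cl [x, y]) T (nodes n) ∧
      ∀ c ∈ combs n, ClS cl (c.map T) := by
  classical
  let Cf : ℕ × Bool × Fin m → V := fun q => C q.1 q.2.1 q.2.2
  let S : (L.sum L.skolem₁).Substructure V :=
    Substructure.closure (L.sum L.skolem₁) (Set.range Cf)
  let M : L.ElementarySubstructure V := S.elementarySkolem₁Reduct
  have hmem : ∀ a : V, a ∈ M ↔ a ∈ S := fun a => Iff.rfl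
  have hC : ∀ i ε s, C i ε s ∈ M := fun i ε s =>
    (hmem _).2 (Substructure.subset_closure ⟨(i, ε, s), rfl⟩)
  have hterm : ∀ a : M, ∃ t : (L.sum L.skolem₁).Term (ℕ × Bool × Fin m), t.realize Cf = (a : V) := by
    intro a
    obtain ⟨t, ht⟩ := Substructure.mem_closure_iff_exists_term.1 ((hmem _).1 a.2)
    choose g hg using fun s : Set.range Cf => s.2
    refine ⟨t.relabel g, ?_⟩
    rw [Term.realize_relabel, ← ht]
    congr 1
    funext s
    exact hg s
  choose tm htm using hterm
  let CM : ℕ → Bool → Fin m → M := fun i ε s => ⟨C i ε s, hC i ε s⟩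
  have hMV : L.completeTheory M = L.completeTheory V := M.elementarilyEquivalent
  have hne : Nonempty M := (ElementarilyEquivalent.nonempty_iff hMV).2 inferInstance
  have hNS : (strSys L M m).NSOP := strSys_NSOP hN M (hV.trans hMV.symm) m
  let hf : Ultrafilter ℕ := Filter.hyperfilter ℕ
  have hF : ∀ n : ℕ, ∀ᶠ d in (hf : Filter ℕ), n ≤ d := fun n =>
    Nat.hyperfilter_le_atTop (Filter.eventually_ge_atTop n)
  let p : Ultrafilter (Fin m → M) := hf.map (fun i => CM i false)
  let q : Ultrafilter (Fin m → M) := hf.map (fun i => CM i true)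
  have hpE : ∀ Q : (Fin m → M) → Prop, (∀ᶠ a in (p : Filter _), Q a) ↔
      ∀ᶠ i in (hf : Filter ℕ), Q (CM i false) := fun Q => Iff.rfl
  have hqE : ∀ Q : (Fin m → M) → Prop, (∀ᶠ a in (q : Filter _), Q a) ↔
      ∀ᶠ i in (hf : Filter ℕ), Q (CM i true) := fun Q => Iff.rfl
  have agree : ∀ P, (strSys L M m).Dfn1 P →
      ∀ᶠ i in (hf : Filter ℕ), (P (CM i true) ↔ P (CM i false)) := by
    rintro P ⟨φ, hφ⟩
    let tf : ((Unit × Fin m) ⊕ M) → (L.sum L.skolem₁).Term (Fin m ⊕ (ℕ × Bool × Fin m)) :=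
      Sum.elim (fun r => Term.var (Sum.inl r.2)) (fun c => (tm c).relabel Sum.inr)
    let φ1 : (L.sum L.skolem₁).Formula ((Unit × Fin m) ⊕ M) := LHom.sumInl.onFormula φ
    let φ2 : (L.sum L.skolem₁).Formula (Fin m ⊕ (ℕ × Bool × Fin m)) :=
      BoundedFormula.subst φ1 tf
    have e1 : ∀ d : Fin m → M, P d ↔ φ2.Realize (Sum.elim (fun s => (d s : V)) Cf) := by
      intro d
      have h1 := hφ (fun _ => d)
      have h2 := M.subtype.map_formula φ (Sum.elim (fun q : Unit × Fin m => d q.2) id)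
      have h3 : φ1.Realize (M.subtype ∘ (Sum.elim (fun q : Unit × Fin m => d q.2) id)) ↔
        φ.Realize (M.subtype ∘ (Sum.elim (fun q : Unit × Fin m => d q.2) id)) :=
        LHom.realize_onFormula _ φ
      have h4 : φ2.Realize (Sum.elim (fun s => (d s : V)) Cf) ↔
          φ1.Realize (fun a => (tf a).realize (Sum.elim (fun s => (d s : V)) Cf)) :=
        BoundedFormula.realize_subst
      refine h1.trans (h2.symm.trans (h3.symm.trans ?_))
      rw [h4]
      refine iff_of_eq (congrArg φ1.Realize ?_)
      funext a
      rcases a with ⟨_, s⟩ | c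
      · rfl
      · simp only [tf, Sum.elim_inr, Term.realize_relabel, Sum.elim_comp_inr, htm]
        rfl
    let bd : (Fin m ⊕ (ℕ × Bool × Fin m)) → ℕ := Sum.elim (fun _ => 0) (fun q => q.1)
    filter_upwards [hF ((φ2.freeVarFinset.sup bd) + 1)] with i hi
    obtain ⟨past, hp1, hp2⟩ := hsame i
    have key : ∀ ε, P (CM i ε) ↔
        φ2.Realize (Sum.elim (C i ε) (fun q => past q.1 q.2.1 q.2.2)) := by
      intro ε
      rw [e1]
      refine realize_congr_fv φ2 _ _ ?_
      rintro (s | r) hr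
      · rfl
      · have : r.1 ≤ φ2.freeVarFinset.sup bd := Finset.le_sup (f := bd) hr
        simp only [Sum.elim_inr, Cf]
        rw [hp1 r.1 (by omega)]
    rw [key, key, hp2]
  have hpq : (strSys L M m).Agree p q := by
    intro P hP h
    rw [hpE] at h
    rw [hqE]
    filter_upwards [h, agree P hP] with i h1 h2 using h2.2 h1
  have hqp : (strSys L M m).Agree q p := by
    intro P hP h
    rw [hqE] at h
    rw [hpE]
    filter_upwards [h, agree P hP] with i h1 h2 using h2.1 h1
  have hcl : ∀ l, (strSys L M m).Dfn (fun w : Fin l → Fin m → M => ClS cl (List.ofFn w)) := by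
    intro l
    refine ⟨(cl l).relabel Sum.inl, fun w => ?_⟩
    refine (ClS_ofFn cl w).trans ?_
    rw [Formula.realize_relabel]
    rfl
  obtain ⟨T, hT1, hT2⟩ := core (strSys L M m) hNS p q hpq hqp (ClS cl) hcl
    (by
      rw [hqE]
      refine Filter.Eventually.of_forall fun i => ?_
      rw [hqE]
      filter_upwards [hF (i+1)] with j hj
      intro h
      apply hanti i j (by omega)
      exact (ClS_sub cl M [CM i true, CM j true]).2 h)
    (by
      intro l
      have h1 : ∀ᶠ a in (p : Filter (Fin m → M)), ∃ i, a = CM i false := by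
        rw [hpE]
        exact Filter.Eventually.of_forall fun i => ⟨i, rfl⟩
      filter_upwards [gen_all p l h1] with D hD
      obtain ⟨is, rfl⟩ : ∃ is : List ℕ, D = is.map fun i => CM i false := by
        clear h1
        induction D with
        | nil => exact ⟨[], rfl⟩
        | cons a D ih =>
          obtain ⟨is, his⟩ := ih (fun b hb => hD b (List.mem_cons_of_mem _ hb))
          obtain ⟨i, hi⟩ := hD a List.mem_cons_self
          exact ⟨i :: is, by rw [his, hi]; rfl⟩
      rw [← ClS_sub, List.map_map]
      exact hclq is) n
  refine ⟨fun η s => (T η s : V), ?_, ?_⟩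
  · intro η hη ν hν h1 h2 h
    exact hT1 η hη ν hν h1 h2 ((ClS_sub cl M [T η, T ν]).1 h)
  · intro c hc
    have := (ClS_sub cl M (c.map T)).2 (hT2 c hc)
    rw [List.map_map] at this
    exact this

theorem tree_exists {L : FirstOrder.Language.{x, y}} {N : Type z} [L.Structure N]
    (hN : IsNSOP1Th L N) {m : ℕ} (cl : ∀ l : ℕ, L.Formula (Fin l × Fin m))
    (b : List Bool → Fin m → N)
    (h1 : ∀ (σ : List Bool) (l : List (List Bool)), (∀ η ∈ l, η <+: σ) → ClS cl (l.map b))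
    (h2 : ∀ e1 e2, (e1 ++ [false]) <+: e2 → ¬ ClS cl [b (e1 ++ [true]), b e2]) (n : ℕ) :
    ∃ T : List Bool → Fin m → N, AntiOn (fun x y => ClS cl [x, y]) T (nodes n) ∧
      ∀ c ∈ combs n, ClS cl (c.map T) := by
  have hm : m ≠ 0 := by
    rintro rfl
    apply h2 [] [false] (List.prefix_refl _)
    have := h1 [true] [ [true], [true] ] (by simp)
    convert this using 2
    simp only [List.map_cons, List.map_nil, List.cons.injEq, and_true]
    exact ⟨rfl, Subsingleton.elim _ _⟩
  have hne : Nonempty N := ⟨b [] ⟨0, Nat.pos_of_ne_zero hm⟩⟩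
  let Φ := (L.sum L.skolem₁).Formula (Fin m ⊕ (ℕ × Bool × Fin m))
  let K := Set (Set Φ)
  letI : LinearOrder K := IsWellOrder.linearOrder WellOrderingRel
  let F : Ultrafilter (Finset K) := Ultrafilter.of Filter.atTop
  have hF : ∀ a : K, ∀ᶠ s in (F : Filter (Finset K)), a ∈ s := fun a =>
    Ultrafilter.of_le _ ((Filter.eventually_ge_atTop {a}).mono fun s hs => hs (by simp))
  let V := (F : Filter (Finset K)).Product (fun _ => N)
  let c : List K → Fin m → V := fun s i => gm F (fun G => b (tcode G s) i)
  have hnV : Nonempty V := inferInstance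
  obtain ⟨a, a', η, C, hlt, hη, hCt, hCf, hp⟩ := seq_abstract (K := K) (Φ := Φ)
    (fun f => Function.cantor_injective f) c
    (fun past d => {φ | φ.Realize (Sum.elim d (fun q => past q.1 q.2.1 q.2.2))})
  have hpre : ∀ i j, i ≤ j → η i <+: η j := by
    intro i j hij
    induction hij with
    | refl => exact List.prefix_refl _
    | step _ ih => exact ih.trans (by rw [hη]; exact List.prefix_append _ _)
  obtain ⟨T, hT1, hT2⟩ := hull_tree hN V (product_theory F).symm cl C
    (by
      intro i
      obtain ⟨past, hp1, hp2⟩ := hp i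
      exact ⟨past, hp1, fun φ => Set.ext_iff.1 hp2 φ⟩)
    (by
      intro i j hij
      rw [hCt, hCt]
      obtain ⟨s, hs⟩ := hpre (i+1) j hij
      have e : η j ++ [a j] = η i ++ a' i :: (s ++ [a j]) := by
        rw [← hs, hη]; simp
      rw [e]
      intro h
      have h3 := (ClS_gm cl F [η i ++ [a i], η i ++ a' i :: (s ++ [a j])]
        (fun s i G => b (tcode G s) i)).1 h
      obtain ⟨G, hG1, hG2⟩ := (h3.and (hF (a i))).exists
      obtain ⟨e, he1, he2⟩ := tcode_anti G (η i) (s ++ [a j]) (a i) (a' i) (hlt i) hG2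
      apply h2 e _ he2
      rw [← he1]
      exact hG1)
    (by
      intro is
      have h3 := (ClS_gm cl F (is.map fun i => η (i+1)) (fun s i G => b (tcode G s) i)).2
        (by
          refine Filter.Eventually.of_forall fun G => ?_
          have := h1 (tcode G (η (is.sum + 1))) ((is.map fun i => η (i+1)).map (tcode G)) (by
            intro ν hν
            simp only [List.mem_map] at hν
            obtain ⟨_, ⟨i, hi, rfl⟩, rfl⟩ := hν
            obtain ⟨s, hs⟩ := hpre (i+1) (is.sum+1) (by
              have := List.single_le_sum (l := is) (by simp) i hi
              omega)
            rw [← hs, tcode_append]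
            exact List.prefix_append _ _)
          rw [List.map_map] at this
          exact this)
      rw [List.map_map] at h3
      have e : (fun i => C i false) = fun i => c (η (i+1)) := funext hCf
      rw [e]
      exact h3) n
  choose X hX using fun η i => gm_surj (T η i)
  have hT : T = fun η i => gm F (X η i) := by funext η i; exact (hX η i).symm
  have ev1 : ∀ᶠ G in (F : Filter (Finset K)), ∀ η ∈ nodes n, ∀ ν ∈ nodes n, η <+: ν → η ≠ ν →
      ¬ ClS cl [fun i => X η i G, fun i => X ν i G] := by
    refine ev_list _ fun η hη => ev_list _ fun ν hν => ?_
    by_cases h : η <+: ν ∧ η ≠ ν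
    · have h4 := hT1 η hη ν hν h.1 h.2
      rw [hT] at h4
      have h5 := (not_congr (ClS_gm cl F [η, ν] X)).1 h4
      rw [← Ultrafilter.eventually_not] at h5
      filter_upwards [h5] with G hG _ _ using hG
    · refine Filter.Eventually.of_forall fun G h1 h2 => absurd ⟨h1, h2⟩ h
  have ev2 : ∀ᶠ G in (F : Filter (Finset K)), ∀ c ∈ combs n,
      ClS cl (c.map fun η i => X η i G) := by
    refine ev_list _ fun c hc => ?_
    have := hT2 c hc
    rw [hT] at this
    exact (ClS_gm cl F c X).1 this
  obtain ⟨G, hG1, hG2⟩ := (ev1.and ev2).exists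
  exact ⟨fun η i => X η i G, hG1, hG2⟩

theorem meet_isPre_left : ∀ a b : List Bool, meet a b <+: a
  | [], b => by simp [meet]
  | a :: as, [] => by simp [meet]
  | a :: as, b :: bs => by
    simp only [meet]
    split_ifs with h
    · simpa using meet_isPre_left as bs
    · simp

theorem meet_isPre_right : ∀ a b : List Bool, meet a b <+: b
  | [], b => by simp [meet]
  | a :: as, [] => by simp [meet]
  | a :: as, b :: bs => by
    simp only [meet]
    split_ifs with h
    · simpa [h] using meet_isPre_right as bs
    · simp

theorem meetInit_isPre (c : ℕ → List Bool) (k i : ℕ) (h : i ≤ k) : meetInit c k <+: c i := by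
  induction k with
  | zero => obtain rfl : i = 0 := by omega
            exact List.prefix_refl _
  | succ k ih =>
    simp only [meetInit]
    rcases Nat.lt_or_ge k i with h' | h'
    · obtain rfl : i = k + 1 := by omega
      exact meet_isPre_right _ _
    · exact (meet_isPre_left _ _).trans (ih h')

theorem cons_comb {l : ℕ} {c t : ℕ → List Bool} {a : Bool} (h : ∀ i < l, c i = a :: t i)
    (hc : IsDescendingComb l c) : IsDescendingComb l t := by
  have hm : ∀ k < l, meetInit c k = a :: meetInit t k := by
    intro k hk
    induction k with
    | zero => exact h 0 hk
    | succ k ih => simp [meetInit, ih (by omega), h (k+1) hk, meet]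
  refine ⟨fun i j hi hj hij => ?_, fun i j hij hj => ?_, fun k hk => ?_⟩
  · have := hc.1 i j hi hj hij
    rw [h i hi, h j hj] at this
    simpa using this
  · have := hc.2.1 i j hij hj
    rw [h i (by omega), h j hj] at this
    simpa [LexLt, StrictPrefix, meet] using this
  · have := hc.2.2 k hk
    rw [hm _ hk, hm k (by omega)] at this
    simpa [StrictPrefix] using this

theorem comb_restrict {l l' : ℕ} {c : ℕ → List Bool} (h : l' ≤ l)
    (hc : IsDescendingComb l c) : IsDescendingComb l' c :=
  ⟨fun i j hi hj => hc.1 i j (by omega) (by omega), fun i j hij hj => hc.2.1 i j hij (by omega),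
    fun k hk => hc.2.2 k (by omega)⟩

theorem nil_mem_combs (n : ℕ) : [] ∈ combs n := by
  induction n with
  | zero => simp [combs]
  | succ n ih =>
    simp only [combs, List.mem_cons, List.mem_append, List.mem_map]
    exact Or.inr (Or.inl (Or.inl ⟨[], ih, rfl⟩))

theorem mem_combs_cons {n : ℕ} (a : Bool) {C : List (List Bool)} (h : C ∈ combs n) :
    C.map (List.cons a) ∈ combs (n+1) := by
  simp only [combs, List.mem_cons, List.mem_append, List.mem_map]
  cases a
  · exact Or.inr (Or.inl (Or.inl ⟨C, h, rfl⟩))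
  · exact Or.inr (Or.inl (Or.inr ⟨C, h, rfl⟩))

theorem comb_mem (n : ℕ) : ∀ (l : ℕ) (c : ℕ → List Bool), IsDescendingComb l c →
    (∀ i < l, (c i).length < n) → (List.range l).reverse.map c ∈ combs n := by
  induction n with
  | zero =>
    intro l c _ hl
    obtain rfl : l = 0 := by
      by_contra h
      exact absurd (hl 0 (Nat.pos_of_ne_zero h)) (by omega)
    simp [combs]
  | succ n ih =>
    intro l c hc hl
    have same : ∀ (l : ℕ) (a : Bool), IsDescendingComb l c → (∀ i < l, (c i).length < n + 1) →
        (∀ i < l, c i = a :: (c i).tail) →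
        ∃ C ∈ combs n, (List.range l).reverse.map c = C.map (List.cons a) := by
      intro l a hc hl h
      refine ⟨_, ih l (fun i => (c i).tail) (cons_comb h hc) ?_, ?_⟩
      · intro i hi
        have h1 := hl i hi
        rw [h i hi] at h1
        simpa using h1
      · rw [List.map_map]
        apply List.map_congr_left
        intro i hi
        exact h i (by simpa using hi)
    match l, hc, hl with
    | 0, _, _ => exact nil_mem_combs _
    | 1, hc, hl =>
      rcases h : c 0 with _ | ⟨a, t⟩
      · simp [combs, h]
      · obtain ⟨C, hC, hCe⟩ := same 1 a hc hl (fun i hi => by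
          obtain rfl : i = 0 := by omega
          simp [h])
        rw [hCe]
        exact mem_combs_cons a hC
    | l + 2, hc, hl =>
      rcases h : meetInit c l with _ | ⟨a, μ⟩
      · have := hc.2.2 l (by omega)
        rw [h] at this
        exact absurd (List.prefix_nil.1 this.1) this.2
      · have h1 : ∀ i < l + 1, c i = a :: (c i).tail := by
          intro i hi
          obtain ⟨s, hs⟩ := meetInit_isPre c l i (by omega)
          rw [← hs, h]
          simp
        rcases h2 : c (l+1) with _ | ⟨a', ν⟩
        · exfalso
          apply hc.1 (l+1) 0 (by omega) (by omega) (by omega)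
          simp [h2]
        · by_cases haa : a' = a
          · subst haa
            obtain ⟨C, hC, hCe⟩ := same (l+2) a' hc hl (fun i hi => by
              rcases Nat.lt_or_ge i (l+1) with h3 | h3
              · exact h1 i h3
              · obtain rfl : i = l + 1 := by omega
                simp [h2])
            rw [hCe]
            exact mem_combs_cons a' hC
          · have hlex := hc.2.1 0 (l+1) (by omega) (by omega)
            rw [h1 0 (by omega), h2] at hlex
            simp only [LexLt, StrictPrefix, List.cons_prefix_cons, meet, Ne.symm haa, if_false,
              false_and, false_or, List.nil_append] at hlex
            obtain ⟨⟨h3, _⟩, ⟨h4, _⟩⟩ := hlex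
            obtain ⟨C, hC, hCe⟩ := same (l+1) a (comb_restrict (by omega) hc)
              (fun i hi => hl i (by omega)) h1
            rw [List.range_succ, List.reverse_append, List.map_append, hCe]
            simp only [combs, List.mem_cons, List.mem_append, List.mem_map, List.mem_flatMap]
            refine Or.inr (Or.inr ⟨ν, ?_, C, hC, ?_⟩)
            · rw [mem_nodes]
              have := hl (l+1) (by omega)
              rw [h2] at this
              simpa using this
            · simp [h2, ← h3, ← h4]

theorem subst_realize {L : FirstOrder.Language.{u, v}} {𝕄 : Type w} [L.Structure 𝕄] {α : Type w'}
    {γ : Type} (φ : ParamFormula L 𝕄 (α ⊕ γ)) (c : γ → 𝕄) (xx : α → 𝕄) :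
    (φ.subst c).Realize xx ↔ φ.toFormula.Realize (Sum.elim (Sum.elim xx c) φ.params) := by
  unfold ParamFormula.subst ParamFormula.Realize
  rw [Formula.realize_relabel]
  refine iff_of_eq (congrArg φ.toFormula.Realize ?_)
  funext a
  rcases a with (a | a) | a <;> rfl

/-- joint consistency of a finite list of instances is expressible by a formula -/
theorem conj_formula {L : FirstOrder.Language.{u, v}} (𝕄 : Type w) [L.Structure 𝕄]
    {k : ℕ} {Y Q : Type} {α : Type w'} {β : Type*} (Λ : List β) (g : β → Y → α)
    (ψ : L.Formula ((Fin k ⊕ Y) ⊕ Q)) :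
    ∃ χ : L.Formula (α ⊕ Q), ∀ (v : α → 𝕄) (c : Q → 𝕄), χ.Realize (Sum.elim v c) ↔
      ∃ xx : Fin k → 𝕄, ∀ b ∈ Λ, ψ.Realize (Sum.elim (Sum.elim xx (fun y => v (g b y))) c) := by
  have h : ∃ χ : L.Formula ((α ⊕ Q) ⊕ Fin k), ∀ (v : α → 𝕄) (c : Q → 𝕄) (xx : Fin k → 𝕄),
      χ.Realize (Sum.elim (Sum.elim v c) xx) ↔
      ∀ b ∈ Λ, ψ.Realize (Sum.elim (Sum.elim xx (fun y => v (g b y))) c) := by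
    induction Λ with
    | nil => exact ⟨⊤, fun v c xx => by simp⟩
    | cons b Λ ih =>
      obtain ⟨χ, hχ⟩ := ih
      let r : ((Fin k ⊕ Y) ⊕ Q) → ((α ⊕ Q) ⊕ Fin k)
        | Sum.inl (Sum.inl i) => Sum.inr i
        | Sum.inl (Sum.inr y) => Sum.inl (Sum.inl (g b y))
        | Sum.inr q => Sum.inl (Sum.inr q)
      refine ⟨ψ.relabel r ⊓ χ, fun v c xx => ?_⟩
      rw [Formula.realize_inf, hχ, Formula.realize_relabel, List.forall_mem_cons]
      refine and_congr_left fun _ => iff_of_eq (congrArg ψ.Realize ?_)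
      funext a
      rcases a with (a | a) | a <;> rfl
  obtain ⟨χ, hχ⟩ := h
  refine ⟨χ.iExs (Fin k), fun v c => ?_⟩
  rw [Formula.realize_iExs]
  exact exists_congr fun xx => hχ v c xx

theorem compact_dctp {L : FirstOrder.Language.{u, v}} {𝕄 : Type w} [L.Structure 𝕄]
    (κ : Cardinal.{w}) [IsMonster L 𝕄 κ] (A : Set 𝕄) (hA : Cardinal.mk A < κ)
    (hκ : Cardinal.aleph0 < κ) {k ny : ℕ} (ψ : ParamFormula L 𝕄 (Fin k ⊕ Fin ny))
    (hψ : ψ.ParamsIn A) (T : ℕ → List Bool → Fin ny → 𝕄)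
    (h1 : ∀ n η ν, η ∈ nodes n → ν ∈ nodes n → η <+: ν → η ≠ ν →
      ¬ ∃ xx : Fin k → 𝕄, ∀ μ ∈ [η, ν],
        ψ.toFormula.Realize (Sum.elim (Sum.elim xx (T n μ)) ψ.params))
    (h2 : ∀ n, ∀ C ∈ combs n, ∃ xx : Fin k → 𝕄, ∀ μ ∈ C,
        ψ.toFormula.Realize (Sum.elim (Sum.elim xx (T n μ)) ψ.params)) :
    HasKDCTP2 L 𝕄 2 := by
  classical
  choose χ hχ using fun Λ : List (List Bool) =>
    conj_formula 𝕄 (α := ULift.{w} (List Bool × Fin ny)) Λ (fun η y => ULift.up (η, y)) ψ.toFormula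
  let S1 : Set (ParamFormula L 𝕄 (ULift.{w} (List Bool × Fin ny))) :=
    {θ | ∃ η ν : List Bool, η <+: ν ∧ η ≠ ν ∧ θ = ⟨ψ.Params, ∼(χ [η, ν]), ψ.params⟩}
  let S2 : Set (ParamFormula L 𝕄 (ULift.{w} (List Bool × Fin ny))) :=
    {θ | ∃ (l : ℕ) (c : ℕ → List Bool), IsDescendingComb l c ∧
      θ = ⟨ψ.Params, χ ((List.range l).reverse.map c), ψ.params⟩}
  obtain ⟨xx, hxx⟩ := IsMonster.saturated (L := L) (κ := κ) A (S1 ∪ S2)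
    (by
      refine lt_of_le_of_lt ?_ hκ
      exact Cardinal.mk_le_aleph0) hA
    (by
      rintro θ (⟨η, ν, _, _, rfl⟩ | ⟨l, c, _, rfl⟩) <;> exact hψ)
    (by
      intro S₀ hS₀
      have : ∀ θ ∈ S₀, ∃ n0, ∀ n ≥ n0, θ.Realize fun a => T n a.down.1 a.down.2 := by
        intro θ hθ
        rcases hS₀ θ hθ with ⟨η, ν, he, hne, rfl⟩ | ⟨l, c, hc, rfl⟩
        · refine ⟨ν.length + 1, fun n hn => ?_⟩
          unfold ParamFormula.Realize
          rw [Formula.realize_not, hχ]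
          refine h1 n η ν ?_ ?_ he hne
          · rw [mem_nodes]; have := he.length_le; omega
          · rw [mem_nodes]; omega
        · refine ⟨(Finset.range l).sup (fun i => (c i).length) + 1, fun n hn => ?_⟩
          unfold ParamFormula.Realize
          rw [hχ]
          refine h2 n _ (comb_mem n l c hc fun i hi => ?_)
          have : (c i).length ≤ (Finset.range l).sup (fun i => (c i).length) :=
            Finset.le_sup (f := fun i => (c i).length) (by simpa using hi)
          omega
      choose! n0 hn0 using this
      exact ⟨_, fun θ hθ => hn0 θ hθ (S₀.sup n0) (Finset.le_sup hθ)⟩)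
  refine ⟨k, ny, ψ, fun η y => xx (ULift.up (η, y)), ?_, ?_⟩
  · intro σ s hs
    obtain ⟨i, j, hij, rfl⟩ := Finset.card_eq_two.1 hs
    rintro ⟨a, ha⟩
    have main : ∀ i' j' : ℕ, i' < j' → (∀ r, r = i' ∨ r = j' → r = i ∨ r = j) → False := by
      intro i' j' hlt hr
      have := hxx _ (Or.inl ⟨List.ofFn fun r : Fin i' => σ r, List.ofFn fun r : Fin j' => σ r,
        ofFn_isPre σ hlt.le, fun h => by simpa [hlt.ne] using congrArg List.length h, rfl⟩)
      unfold ParamFormula.Realize at this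
      rw [Formula.realize_not, hχ] at this
      apply this
      refine ⟨a, fun μ hμ => ?_⟩
      have key : ∀ r, r = i' ∨ r = j' → μ = (List.ofFn fun q : Fin r => σ q) →
          ψ.toFormula.Realize (Sum.elim (Sum.elim a fun y => xx (ULift.up (μ, y))) ψ.params) := by
        intro r h1 h2
        have := ha r (by simpa using hr r h1)
        beta_reduce at this
        rw [subst_realize] at this
        rw [← h2] at this
        exact this
      simp only [List.mem_cons, List.not_mem_nil, or_false] at hμ
      rcases hμ with h | h
      · exact key i' (Or.inl rfl) h
      · exact key j' (Or.inr rfl) h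
    rcases lt_or_gt_of_ne hij with h | h
    · exact main i j h (fun r hr => hr)
    · exact main j i h (fun r hr => hr.symm)
  · intro l c hc
    have := hxx _ (Or.inr ⟨l, c, hc, rfl⟩)
    unfold ParamFormula.Realize at this
    rw [hχ] at this
    obtain ⟨a, ha⟩ := this
    refine ⟨a, fun i hi => ?_⟩
    rw [subst_realize]
    exact ha (c i) (List.mem_map.2 ⟨i, by simpa using hi, rfl⟩)

theorem final_11
    (L : FirstOrder.Language.{u, v}) (𝕄 : Type w) [L.Structure 𝕄]
    (κ : Cardinal.{w}) [IsMonster L 𝕄 κ]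
    (M : L.ElementarySubstructure 𝕄) (hMsmall : Cardinal.mk ↥(M : Set 𝕄) < κ)
    {nv : ℕ} (P : Set (ParamFormula L 𝕄 (Fin nv)))
    (hT : NOmegaDCTP2 L 𝕄)
    (hInternal : IsNSOP1Th (pLang L 𝕄 (M : Set 𝕄) nv) (PRealizations L 𝕄 P)) :
    CoNSOP1 L 𝕄 (M : Set 𝕄) P := by
  rintro ⟨k, m, φ, b, hφ, hb, hcons, hinc⟩
  simp only [subst_realize] at hcons hinc
  -- consistency along finite paths
  have hpath : ∀ (σ : List Bool) (l : List (List Bool)), (∀ η ∈ l, η <+: σ) →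
      ∃ xx : Fin k → 𝕄, ∀ η ∈ l,
        φ.toFormula.Realize (Sum.elim (Sum.elim xx (flat (b η))) φ.params) := by
    intro σ l hl
    obtain ⟨xx, hxx⟩ := hcons (fun i => σ.getD i false) (Finset.range (σ.length + 1))
    refine ⟨xx, fun η hη => ?_⟩
    have h1 := hl η hη
    have := hxx η.length (by
      have := h1.length_le
      simp; omega)
    have e : (List.ofFn fun i : Fin η.length => σ.getD i false) = η := by
      apply List.ext_getElem
      · simp
      · intro i hi hi'
        obtain ⟨s, rfl⟩ := h1
        simp [List.getElem?_append_left hi', List.getElem?_eq_getElem hi']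
    beta_reduce at this
    rw [e] at this
    exact this
  -- the monster is infinite
  have hinf : Infinite 𝕄 := by
    by_contra hfin
    rw [not_infinite_iff_finite] at hfin
    let f : ℕ → (Fin m → Fin nv → 𝕄) := fun i => b (List.replicate i false ++ [true])
    have hlt : ∀ i j, i < j → f i ≠ f j := by
      intro i j hij he
      obtain ⟨xx, hxx⟩ := hpath (List.replicate j false ++ [true]) [List.replicate j false ++ [true] ] (by simp)
      have h3 := hxx (List.replicate j false ++ [true]) (by simp)
      refine hinc (List.replicate i false) (List.replicate j false ++ [true]) ?_ ⟨xx, h3, ?_⟩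
      · obtain ⟨r, rfl⟩ := Nat.exists_eq_add_of_lt hij
        refine ⟨List.replicate r false ++ [true], ?_⟩
        rw [show i + r + 1 = i + (1 + r) by omega, List.replicate_add, List.replicate_add]
        simp
      · have he' : b (List.replicate i false ++ [true]) = b (List.replicate j false ++ [true]) := he
        rw [he']
        exact h3
    have hinj : Function.Injective f := by
      intro i j h
      rcases lt_trichotomy i j with h1 | h1 | h1
      · exact absurd h (hlt i j h1)
      · exact h1
      · exact absurd h.symm (hlt j i h1)
    exact not_injective_infinite_finite f hinj
  have hMinf : Infinite M := (ElementarilyEquivalent.infinite_iff M.elementarilyEquivalent).2 hinf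
  have hκ : Cardinal.aleph0 < κ := lt_of_le_of_lt (Cardinal.aleph0_le_mk_iff.2 hMinf) hMsmall
  -- the relation symbols
  choose χ hχ using fun l : ℕ =>
    conj_formula 𝕄 (α := Fin (l * m) × Fin nv) (List.finRange l)
      (fun i (y : Fin m × Fin nv) => (finProdFinEquiv (i, y.1), y.2)) φ.toFormula
  let R : ∀ l : ℕ, (pLang L 𝕄 (M : Set 𝕄) nv).Relations (l * m) := fun l =>
    ⟨⟨φ.Params, χ l, φ.params⟩, hφ⟩
  let cl : ∀ l : ℕ, (pLang L 𝕄 (M : Set 𝕄) nv).Formula (Fin l × Fin m) := fun l =>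
    (R l).formula (fun t => Term.var (finProdFinEquiv.symm t))
  have hcl : ∀ l : List (Fin m → PRealizations L 𝕄 P), ClS cl l ↔ ∃ xx : Fin k → 𝕄, ∀ d ∈ l,
      φ.toFormula.Realize (Sum.elim (Sum.elim xx (fun q => (d q.1).1 q.2)) φ.params) := by
    intro l
    obtain ⟨r, w, rfl⟩ : ∃ (r : ℕ) (w : Fin r → Fin m → PRealizations L 𝕄 P), l = List.ofFn w :=
      ⟨_, _, (List.ofFn_get l).symm⟩
    rw [ClS_ofFn]
    have h1 : (cl r).Realize (fun q => w q.1 q.2) ↔ (χ r).Realize (Sum.elim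
        (fun q : Fin (r * m) × Fin nv =>
          (w (finProdFinEquiv.symm q.1).1 (finProdFinEquiv.symm q.1).2).1 q.2) φ.params) := by
      simp only [cl]
      rw [Formula.realize_rel]
      rfl
    rw [h1, hχ]
    simp [List.mem_ofFn]
  have hN := tree_exists hInternal cl (fun η j => (⟨b η j, hb η j⟩ : PRealizations L 𝕄 P))
    (by
      intro σ l hl
      rw [hcl]
      obtain ⟨xx, hxx⟩ := hpath σ l hl
      refine ⟨xx, fun d hd => ?_⟩
      obtain ⟨η, hη, rfl⟩ := List.mem_map.1 hd
      exact hxx η hη)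
    (by
      intro e1 e2 he
      rw [hcl]
      rintro ⟨xx, hxx⟩
      exact hinc e1 e2 he ⟨xx, hxx _ (List.mem_cons_of_mem _ List.mem_cons_self), hxx _ List.mem_cons_self⟩)
  choose T hT1 hT2 using hN
  let e : Fin m × Fin nv ≃ Fin (m * nv) := finProdFinEquiv
  let ψ : ParamFormula L 𝕄 (Fin k ⊕ Fin (m * nv)) :=
    ⟨φ.Params, φ.toFormula.relabel (Sum.map (Sum.map id e) id), φ.params⟩
  have hψ : ∀ (xx : Fin k → 𝕄) (d : Fin m → PRealizations L 𝕄 P),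
      ψ.toFormula.Realize (Sum.elim (Sum.elim xx fun y => (d (e.symm y).1).1 (e.symm y).2) ψ.params) ↔
      φ.toFormula.Realize (Sum.elim (Sum.elim xx (fun q => (d q.1).1 q.2)) φ.params) := by
    intro xx d
    simp only [ψ]
    rw [Formula.realize_relabel]
    refine iff_of_eq (congrArg φ.toFormula.Realize ?_)
    funext a
    rcases a with (a | a) | a <;> simp
  refine hT 2 (compact_dctp κ (M : Set 𝕄) hMsmall hκ ψ hφ
    (fun n η y => (T n η (e.symm y).1).1 (e.symm y).2) ?_ ?_)
  · rintro n η ν hη hν h1 h2 ⟨xx, hxx⟩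
    apply hT1 n η hη ν hν h1 h2
    rw [hcl]
    refine ⟨xx, fun d hd => ?_⟩
    simp only [List.mem_cons, List.not_mem_nil, or_false] at hd
    rcases hd with rfl | rfl
    · exact (hψ _ _).1 (hxx η (by simp))
    · exact (hψ _ _).1 (hxx ν (by simp))
  · intro n C hC
    obtain ⟨xx, hxx⟩ := (hcl _).1 (hT2 n C hC)
    exact ⟨xx, fun μ hμ => (hψ _ _).2 (hxx _ (List.mem_map.2 ⟨μ, hμ, rfl⟩))⟩

/-- in an N-ω-DCTP₂ theory, internally NSOP₁ partial types over a
model are co-NSOP₁. -/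
theorem statement_11
    (L : FirstOrder.Language.{u, v}) (𝕄 : Type w) [L.Structure 𝕄]
    (κ : Cardinal.{w}) [IsMonster L 𝕄 κ]
    (M : L.ElementarySubstructure 𝕄) (hMsmall : Cardinal.mk ↥(M : Set 𝕄) < κ)
    {nv : ℕ} (P : Set (ParamFormula L 𝕄 (Fin nv)))
    (hP : ∀ φ ∈ P, φ.ParamsIn (M : Set 𝕄))
    (hT : NOmegaDCTP2 L 𝕄)
    (hInternal : IsNSOP1Th (pLang L 𝕄 (M : Set 𝕄) nv) (PRealizations L 𝕄 P)) :
    CoNSOP1 L 𝕄 (M : Set 𝕄) P := by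
  exact final_11 L 𝕄 κ M hMsmall P hT hInternal

end NSOP3Paper
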